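/- arXiv:1806.00469 — 8 statements merged into one kernel-verified Lean document; each statement's English description precedes it below -/
import Mathlib

section
/- Let N > ℓ ≥ 1 be integers and let W, Z_1, ..., Z_N be random variables on a common probability space, each taking values in a finite set. Suppose (decodability) H(W | Z_1, ..., Z_N) = 0, and (security) for every subset L ⊆ {1,...,N} with |L| = ℓ, the tuple Z_L = (Z_i)_{i ∈ L} satisfies I(W ; Z_L) = 0. Then H(W) ≤ ((N − ℓ)/N) · ∑_{i=1}^{N} H(Z_i). -/
/-!
Fix a set `L` of `ℓ` servers. Always `H(W) = I(W ; Z_L) + H(W | Z_L)`, and revealing the remaining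
answers lowers the uncertainty about `W` by at most their entropy, so
`H(W) ≤ I(W ; Z_L) + H(W | Z) + ∑_{i ∉ L} H(Z_i)`,
where the first two terms vanish by security and decodability. Among the sets `Lᶜ` of `N - ℓ`
servers, one has total entropy at most the fraction `(N - ℓ) / N` of `∑ᵢ H(Z_i)`: in a group
structure on the set of servers, the translates of a fixed `(N - ℓ)`-set cover every server
`N - ℓ` times.
-/

open MeasureTheory ProbabilityTheory

/-- Shannon entropy of a random variable `X` taking values in a finite set:
`H(X) = -∑ₓ P(X = x) log P(X = x)`. -/
noncomputable def Hent {Ω : Type*} [MeasurableSpace Ω] (μ : Measure Ω)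
    {α : Type*} [Fintype α] (X : Ω → α) : ℝ :=
  - ∑ x : α, (μ (X ⁻¹' {x})).toReal * Real.log (μ (X ⁻¹' {x})).toReal

/-- Conditional entropy `H(X | Y) = H(X, Y) - H(Y)`. -/
noncomputable def condEnt {Ω : Type*} [MeasurableSpace Ω] (μ : Measure Ω)
    {α β : Type*} [Fintype α] [Fintype β] (X : Ω → α) (Y : Ω → β) : ℝ :=
  Hent μ (fun ω => (X ω, Y ω)) - Hent μ Y

/-- Mutual information `I(X ; Y) = H(X) + H(Y) - H(X, Y)`. -/
noncomputable def mutInfo {Ω : Type*} [MeasurableSpace Ω] (μ : Measure Ω)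
    {α β : Type*} [Fintype α] [Fintype β] (X : Ω → α) (Y : Ω → β) : ℝ :=
  Hent μ X + Hent μ Y - Hent μ (fun ω => (X ω, Y ω))

open Finset

section Averaging

variable {G M : Type*} [Fintype G] [AddCommMonoid M]

lemma sum_sum_add_right_eq_card_nsmul_sum [AddGroup G] (S : Finset G) (f : G → M) :
    ∑ g, ∑ i ∈ S, f (i + g) = #S • ∑ g, f g := by
  rw [sum_comm, ← sum_const]
  exact sum_congr rfl fun i _ => Equiv.sum_comp (Equiv.addLeft i) f

lemma exists_card_eq_card_nsmul_sum_le [LinearOrder M] [IsOrderedCancelAddMonoid M] [Nonempty G]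
    {m : ℕ} (hm : m ≤ Fintype.card G) (f : G → M) :
    ∃ S : Finset G, #S = m ∧ Fintype.card G • ∑ i ∈ S, f i ≤ m • ∑ i, f i := by
  obtain ⟨_⟩ := nonempty_commRing G
  obtain ⟨S, -, hS⟩ := exists_subset_card_eq (s := (univ : Finset G)) hm
  obtain ⟨g, -, hg⟩ : ∃ g ∈ univ, Fintype.card G • ∑ i ∈ S, f (i + g) ≤ m • ∑ i, f i := by
    refine exists_le_of_sum_le univ_nonempty ?_
    rw [← smul_sum, sum_sum_add_right_eq_card_nsmul_sum, hS, sum_const, card_univ]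
  exact ⟨S.map (Equiv.addRight g).toEmbedding, by simpa using hS, by simpa using hg⟩

end Averaging

lemma sum_mul_log_le_sum_mul_log {ι : Type*} {s : Finset ι} {p q : ι → ℝ}
    (hp : ∀ i ∈ s, 0 ≤ p i) (hq : ∀ i ∈ s, 0 ≤ q i) (hpq : ∀ i ∈ s, q i = 0 → p i = 0)
    (hsum : ∑ i ∈ s, q i ≤ ∑ i ∈ s, p i) :
    ∑ i ∈ s, p i * Real.log (q i) ≤ ∑ i ∈ s, p i * Real.log (p i) := by
  have pointwise : ∀ i ∈ s, p i * Real.log (q i) ≤ p i * Real.log (p i) + (q i - p i) := by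
    intro i hi
    rcases (hp i hi).eq_or_lt with hp0 | hp0
    · simpa [← hp0] using hq i hi
    · have hq0 : q i ≠ 0 := fun h => hp0.ne' (hpq i hi h)
      calc p i * Real.log (q i)
          = p i * Real.log (p i) + p i * Real.log (q i / p i) := by
            rw [Real.log_div hq0 hp0.ne']; ring
        _ ≤ p i * Real.log (p i) + p i * (q i / p i - 1) := by
            gcongr
            exact Real.log_le_sub_one_of_pos (div_pos ((hq i hi).lt_of_ne' hq0) hp0)
        _ = p i * Real.log (p i) + (q i - p i) := by field_simp
  calc ∑ i ∈ s, p i * Real.log (q i)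
      ≤ ∑ i ∈ s, p i * Real.log (p i) + (∑ i ∈ s, q i - ∑ i ∈ s, p i) := by
        simpa only [sum_add_distrib, sum_sub_distrib] using sum_le_sum pointwise
    _ ≤ ∑ i ∈ s, p i * Real.log (p i) := by linarith

section Law

variable {Ω : Type*} [MeasurableSpace Ω] {μ : Measure Ω} {α β : Type*}

lemma measureReal_preimage_singleton_le_comp [IsFiniteMeasure μ] (X : Ω → α) (f : α → β) (x : α) :
    μ.real (X ⁻¹' {x}) ≤ μ.real (f ∘ X ⁻¹' {f x}) :=
  measureReal_mono fun _ => congrArg f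

variable [Fintype α] [MeasurableSpace α] [MeasurableSingletonClass α] {X : Ω → α}

lemma measureReal_preimage_comp_singleton [IsFiniteMeasure μ] [DecidableEq β]
    (hX : Measurable X) (f : α → β) (y : β) :
    μ.real (f ∘ X ⁻¹' {y}) = ∑ x with f x = y, μ.real (X ⁻¹' {x}) := by
  rw [sum_measureReal_preimage_singleton _ fun x _ => hX (measurableSet_singleton x)]
  congr 1
  ext ω
  simp

lemma sum_measureReal_preimage_singleton_eq_one [IsProbabilityMeasure μ] (hX : Measurable X) :
    ∑ x, μ.real (X ⁻¹' {x}) = 1 := by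
  rw [sum_measureReal_preimage_singleton univ fun x _ => hX (measurableSet_singleton x)]
  simp

end Law

section Entropy

variable {Ω : Type*} [MeasurableSpace Ω] {μ : Measure Ω}
  {α β γ δ : Type*} [Fintype α] [Fintype β] [Fintype γ] [Fintype δ]

lemma hent_eq_neg_sum_measureReal (X : Ω → α) :
    Hent μ X = -∑ x, μ.real (X ⁻¹' {x}) * Real.log (μ.real (X ⁻¹' {x})) :=
  rfl

lemma hent_eq_mutInfo_add_condEnt (X : Ω → α) (Y : Ω → β) :
    Hent μ X = mutInfo μ X Y + condEnt μ X Y := by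
  rw [mutInfo, condEnt]
  ring

lemma hent_of_subsingleton [IsProbabilityMeasure μ] [Subsingleton α] (X : Ω → α) :
    Hent μ X = 0 := by
  have preimage_eq_univ (x : α) : X ⁻¹' {x} = Set.univ := by
    ext ω
    simpa using Subsingleton.elim (X ω) x
  simp [hent_eq_neg_sum_measureReal, preimage_eq_univ]

section FiniteMeasure

variable [IsFiniteMeasure μ] [MeasurableSpace α] [MeasurableSingletonClass α] {X : Ω → α}

lemma hent_comp_eq_neg_sum (hX : Measurable X) (f : α → β) :
    Hent μ (f ∘ X) =
      -∑ x, μ.real (X ⁻¹' {x}) * Real.log (μ.real (f ∘ X ⁻¹' {f x})) := by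
  classical
  rw [hent_eq_neg_sum_measureReal, ← sum_fiberwise univ f]
  congr 1
  refine sum_congr rfl fun y _ => ?_
  nth_rw 1 [measureReal_preimage_comp_singleton hX, sum_mul]
  refine sum_congr rfl fun x hx => ?_
  rw [(mem_filter.1 hx).2]

lemma hent_comp_le (hX : Measurable X) (f : α → β) : Hent μ (f ∘ X) ≤ Hent μ X := by
  rw [hent_comp_eq_neg_sum hX, hent_eq_neg_sum_measureReal]
  refine neg_le_neg (sum_le_sum fun x _ => ?_)
  rcases (measureReal_nonneg (μ := μ) (s := X ⁻¹' {x})).eq_or_lt with h0 | h0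
  · simp [← h0]
  · exact mul_le_mul_of_nonneg_left
      (Real.log_le_log h0 (measureReal_preimage_singleton_le_comp X f x)) h0.le

lemma hent_le_of_factorsThrough (hX : Measurable X) {Y : Ω → β} (hYX : Y.FactorsThrough X) :
    Hent μ Y ≤ Hent μ X := by
  rcases isEmpty_or_nonempty Ω with _ | ⟨⟨ω⟩⟩
  · simp [Hent, Measure.eq_zero_of_isEmpty μ]
  · have : Nonempty β := ⟨Y ω⟩
    obtain ⟨f, rfl⟩ := (Function.factorsThrough_iff Y).1 hYX
    exact hent_comp_le hX f

end FiniteMeasure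

variable [IsProbabilityMeasure μ]
  [MeasurableSpace α] [MeasurableSingletonClass α] [MeasurableSpace β] [MeasurableSingletonClass β]
  [MeasurableSpace γ] [MeasurableSingletonClass γ] [MeasurableSpace δ] [MeasurableSingletonClass δ]

lemma hent_add_hent_eq_neg_sum {X : Ω → α} {Y : Ω → β} (hX : Measurable X) (hY : Measurable Y) :
    Hent μ X + Hent μ Y =
      -∑ z : α × β, μ.real ((fun ω => (X ω, Y ω)) ⁻¹' {z}) *
        Real.log (μ.real (X ⁻¹' {z.1}) * μ.real (Y ⁻¹' {z.2})) := by
  have hXY : Measurable fun ω => (X ω, Y ω) := hX.prodMk hY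
  have hX_eq : Hent μ X = -∑ z : α × β, μ.real ((fun ω => (X ω, Y ω)) ⁻¹' {z}) *
      Real.log (μ.real (X ⁻¹' {z.1})) := hent_comp_eq_neg_sum hXY Prod.fst
  have hY_eq : Hent μ Y = -∑ z : α × β, μ.real ((fun ω => (X ω, Y ω)) ⁻¹' {z}) *
      Real.log (μ.real (Y ⁻¹' {z.2})) := hent_comp_eq_neg_sum hXY Prod.snd
  rw [hX_eq, hY_eq, ← neg_add, ← sum_add_distrib]
  congr 1
  refine sum_congr rfl fun z _ => ?_
  rcases (measureReal_nonneg (μ := μ) (s := (fun ω => (X ω, Y ω)) ⁻¹' {z})).eq_or_lt with h0 | h0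
  · simp [← h0]
  · have hX_pos : 0 < μ.real (X ⁻¹' {z.1}) :=
      h0.trans_le (measureReal_preimage_singleton_le_comp _ Prod.fst z)
    have hY_pos : 0 < μ.real (Y ⁻¹' {z.2}) :=
      h0.trans_le (measureReal_preimage_singleton_le_comp _ Prod.snd z)
    rw [Real.log_mul hX_pos.ne' hY_pos.ne', mul_add]

lemma hent_prodMk_le {X : Ω → α} {Y : Ω → β} (hX : Measurable X) (hY : Measurable Y) :
    Hent μ (fun ω => (X ω, Y ω)) ≤ Hent μ X + Hent μ Y := by
  rw [hent_add_hent_eq_neg_sum hX hY, hent_eq_neg_sum_measureReal]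
  refine neg_le_neg (sum_mul_log_le_sum_mul_log (fun _ _ => measureReal_nonneg)
    (fun _ _ => mul_nonneg measureReal_nonneg measureReal_nonneg) (fun z _ hz => ?_) ?_)
  · refine le_antisymm ?_ measureReal_nonneg
    rcases mul_eq_zero.1 hz with h | h
    · exact (measureReal_preimage_singleton_le_comp _ Prod.fst z).trans_eq h
    · exact (measureReal_preimage_singleton_le_comp _ Prod.snd z).trans_eq h
  · rw [sum_measureReal_preimage_singleton_eq_one (hX.prodMk hY), Fintype.sum_prod_type]
    simp only [← Fintype.sum_mul_sum, sum_measureReal_preimage_singleton_eq_one hX,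
      sum_measureReal_preimage_singleton_eq_one hY, mul_one, le_refl]

lemma hent_restrict_le_sum {ι : Type*} [DecidableEq ι] {ζ : ι → Type*} [∀ i, Fintype (ζ i)]
    [∀ i, MeasurableSpace (ζ i)] [∀ i, MeasurableSingletonClass (ζ i)]
    {Z : ∀ i, Ω → ζ i} (hZ : ∀ i, Measurable (Z i)) (S : Finset ι) :
    Hent μ (fun ω (i : S) => Z i ω) ≤ ∑ i ∈ S, Hent μ (Z i) := by
  induction S using Finset.induction_on with
  | empty => rw [hent_of_subsingleton, sum_empty]
  | insert a S ha ih =>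
    have hZS : Measurable fun ω (i : S) => Z i ω := measurable_pi_lambda _ fun i => hZ i
    calc Hent μ (fun ω (i : (insert a S : Finset ι)) => Z i ω)
        ≤ Hent μ (fun ω => (Z a ω, fun i : S => Z i ω)) := by
          refine hent_le_of_factorsThrough ((hZ a).prodMk hZS) fun ω ω' h => ?_
          obtain ⟨ha_eq, hS_eq⟩ := Prod.mk.inj h
          ext ⟨i, hi⟩
          rcases mem_insert.1 hi with rfl | hiS
          · exact ha_eq
          · exact congrFun hS_eq ⟨i, hiS⟩
      _ ≤ Hent μ (Z a) + Hent μ (fun ω (i : S) => Z i ω) := hent_prodMk_le (hZ a) hZS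
      _ ≤ Hent μ (Z a) + ∑ i ∈ S, Hent μ (Z i) := by gcongr
      _ = ∑ i ∈ insert a S, Hent μ (Z i) := by rw [sum_insert ha]

lemma condEnt_le_condEnt_add_hent {W : Ω → α} {X : Ω → β} {Y : Ω → γ} {V : Ω → δ}
    (hW : Measurable W) (hX : Measurable X) (hY : Measurable Y) (hV : Measurable V)
    (hXV : X.FactorsThrough V) (hVXY : V.FactorsThrough fun ω => (X ω, Y ω)) :
    condEnt μ W X ≤ condEnt μ W V + Hent μ Y := by
  have hWX_le : Hent μ (fun ω => (W ω, X ω)) ≤ Hent μ (fun ω => (W ω, V ω)) :=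
    hent_le_of_factorsThrough (hW.prodMk hV) fun _ _ h =>
      have ⟨hW_eq, hV_eq⟩ := Prod.mk.inj h
      Prod.ext hW_eq (hXV hV_eq)
  have hV_le : Hent μ V ≤ Hent μ X + Hent μ Y :=
    (hent_le_of_factorsThrough (hX.prodMk hY) hVXY).trans (hent_prodMk_le hX hY)
  rw [condEnt, condEnt]
  linarith

lemma condEnt_restrict_compl_le {ι : Type*} [Fintype ι] [DecidableEq ι] {ζ : ι → Type*}
    [∀ i, Fintype (ζ i)] [∀ i, MeasurableSpace (ζ i)] [∀ i, MeasurableSingletonClass (ζ i)]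
    {W : Ω → α} (hW : Measurable W) {Z : ∀ i, Ω → ζ i} (hZ : ∀ i, Measurable (Z i))
    (S : Finset ι) :
    condEnt μ W (fun ω (i : (Sᶜ : Finset ι)) => Z i ω) ≤
      condEnt μ W (fun ω i => Z i ω) + ∑ i ∈ S, Hent μ (Z i) := by
  have measurable_restrict (T : Finset ι) : Measurable fun ω (i : T) => Z i ω :=
    measurable_pi_lambda _ fun i => hZ i
  have restrict_factorsThrough :
      (fun ω (i : (Sᶜ : Finset ι)) => Z i ω).FactorsThrough fun ω i => Z i ω :=
    fun _ _ h => funext fun i => congrFun h i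
  have factorsThrough_restrict_prod : (fun ω i => Z i ω).FactorsThrough
      fun ω => (fun i : (Sᶜ : Finset ι) => Z i ω, fun i : S => Z i ω) := by
    intro ω ω' h
    obtain ⟨hSc_eq, hS_eq⟩ := Prod.mk.inj h
    ext i
    by_cases hi : i ∈ S
    · exact congrFun hS_eq ⟨i, hi⟩
    · exact congrFun hSc_eq ⟨i, mem_compl.2 hi⟩
  calc condEnt μ W (fun ω (i : (Sᶜ : Finset ι)) => Z i ω)
      ≤ condEnt μ W (fun ω i => Z i ω) + Hent μ (fun ω (i : S) => Z i ω) :=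
        condEnt_le_condEnt_add_hent hW (measurable_restrict _) (measurable_restrict _)
          (measurable_pi_lambda _ hZ) restrict_factorsThrough factorsThrough_restrict_prod
    _ ≤ condEnt μ W (fun ω i => Z i ω) + ∑ i ∈ S, Hent μ (Z i) := by
        gcongr
        exact hent_restrict_le_sum hZ S

end Entropy

theorem one_sided_converse_general
    {Ω : Type*} [MeasurableSpace Ω] (μ : Measure Ω) [IsProbabilityMeasure μ]
    {ι : Type*} [Fintype ι] [DecidableEq ι] [Nonempty ι] {ℓ : ℕ} (hℓ : ℓ ≤ Fintype.card ι)
    {α : Type*} [Fintype α] [MeasurableSpace α] [MeasurableSingletonClass α]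
    {ζ : ι → Type*} [∀ i, Fintype (ζ i)] [∀ i, MeasurableSpace (ζ i)]
    [∀ i, MeasurableSingletonClass (ζ i)]
    {W : Ω → α} (hW : Measurable W) {Z : ∀ i, Ω → ζ i} (hZ : ∀ i, Measurable (Z i)) {ε : ℝ}
    (hsec : ∀ L : Finset ι, #L = ℓ → mutInfo μ W (fun ω (i : L) => Z i ω) ≤ ε) :
    Hent μ W ≤ (Fintype.card ι - ℓ) / Fintype.card ι * ∑ i, Hent μ (Z i) +
      condEnt μ W (fun ω i => Z i ω) + ε := by
  obtain ⟨S, hS, hS_le⟩ :=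
    exists_card_eq_card_nsmul_sum_le (Nat.sub_le (Fintype.card ι) ℓ) fun i => Hent μ (Z i)
  have hS_sum : ∑ i ∈ S, Hent μ (Z i) ≤
      (Fintype.card ι - ℓ) / Fintype.card ι * ∑ i, Hent μ (Z i) := by
    rw [nsmul_eq_mul, nsmul_eq_mul, Nat.cast_sub hℓ] at hS_le
    rwa [div_mul_eq_mul_div, le_div_iff₀' (by exact_mod_cast Fintype.card_pos)]
  have hS_compl : #Sᶜ = ℓ := by rw [card_compl, hS, Nat.sub_sub_self hℓ]
  calc Hent μ W
      = mutInfo μ W (fun ω (i : (Sᶜ : Finset ι)) => Z i ω) +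
          condEnt μ W (fun ω (i : (Sᶜ : Finset ι)) => Z i ω) := hent_eq_mutInfo_add_condEnt _ _
    _ ≤ ε + (condEnt μ W (fun ω i => Z i ω) + ∑ i ∈ S, Hent μ (Z i)) :=
        add_le_add (hsec _ hS_compl) (condEnt_restrict_compl_le hW hZ S)
    _ ≤ _ := by linarith

/-- Converse of Theorem 1: if `W` is decodable from the answers `Z₁, …, Z_N` and every
`ℓ`-subset of the answers is independent of `W`, then
`H(W) ≤ ((N - ℓ)/N) ∑ᵢ H(Zᵢ)`. -/
theorem one_sided_converse
    {Ω : Type*} [MeasurableSpace Ω] (μ : Measure Ω) [IsProbabilityMeasure μ]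
    {N ℓ : ℕ} (hℓ : 1 ≤ ℓ) (hN : ℓ < N)
    {α : Type*} [Fintype α] [MeasurableSpace α] [MeasurableSingletonClass α]
    {ζ : Fin N → Type*} [∀ i, Fintype (ζ i)] [∀ i, MeasurableSpace (ζ i)]
    [∀ i, MeasurableSingletonClass (ζ i)]
    (W : Ω → α) (hW : Measurable W)
    (Z : ∀ i, Ω → ζ i) (hZ : ∀ i, Measurable (Z i))
    (hdec : condEnt μ W (fun ω => fun i => Z i ω) = 0)
    (hsec : ∀ L : Finset (Fin N), L.card = ℓ →
      mutInfo μ W (fun ω => fun i : L => Z i.1 ω) = 0) :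
    Hent μ W ≤ (((N : ℝ) - ℓ) / N) * ∑ i, Hent μ (Z i) := by
  have : Nonempty (Fin N) := ⟨⟨ℓ, hN⟩⟩
  simpa [hdec] using one_sided_converse_general μ (by simpa using hN.le) hW hZ
    fun L hL => (hsec L hL).le
end

section
/- (Han's inequality, in the form used in the converse of Theorem 1.) Let Z_1, ..., Z_N be random variables on a common probability space, each taking values in a finite set, and let 1 ≤ ℓ ≤ N. Then (1 / C(N,ℓ)) · ∑_{L ⊆ {1,...,N}, |L| = ℓ} H(Z_L)/ℓ ≥ H(Z_1, ..., Z_N)/N, where C(N,ℓ) is the binomial coefficient and Z_L = (Z_i)_{i ∈ L}. -/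
/-!
The entropy `h S` of `(Z_i)_{i ∈ S}` is a nonnegative submodular function of `S`. Submodularity is
strong subadditivity of entropy. Restricting the measure to the fibres of the conditioning variable
turns the latter into plain subadditivity for measures of arbitrary mass, which is Gibbs' inequality
for a joint law against the normalized product of its marginals.

For a submodular `h` with `0 ≤ h ∅`, the bound `(n.choose k) • h U ≤ ∑ h L` over the subsets `L` of
size `k + 1` of a set `U` of size `n + 1` follows by adding elements to `U` one at a time. For a new
element `a`, submodularity gives `h (insert a L) ≥ h L + (h (insert a U) - h U)`. So among the
subsets of `insert a U` of size `k + 1`, those containing `a` are controlled by the bound for the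
subsets of `U` of size `k`, the others by the bound for size `k + 1`, and Pascal's rule adds the two
up.
-/

open MeasureTheory ProbabilityTheory

open Finset Real

section SubmodularFunctions

variable {ι : Type*} [DecidableEq ι]

theorem sum_powersetCard_succ_insert {M : Type*} [AddCommMonoid M] {U : Finset ι} {a : ι}
    (ha : a ∉ U) (k : ℕ) (f : Finset ι → M) :
    ∑ L ∈ (insert a U).powersetCard (k + 1), f L =
      ∑ L ∈ U.powersetCard (k + 1), f L + ∑ L ∈ U.powersetCard k, f (insert a L) := by
  have notMem {m : ℕ} {L : Finset ι} (hL : L ∈ U.powersetCard m) : a ∉ L :=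
    fun haL => ha ((mem_powersetCard.mp hL).1 haL)
  rw [powersetCard_succ_insert ha, sum_union, sum_image]
  · intro L hL L' hL' heq
    rw [← erase_insert (notMem hL), heq, erase_insert (notMem hL')]
  · refine disjoint_left.mpr fun L hL hL' => notMem hL ?_
    obtain ⟨L', -, rfl⟩ := mem_image.mp hL'
    exact mem_insert_self a L'

/-- Submodularity of a set function, the property of `S ↦ H(Z_S)` behind Han's inequality. Neither
monotonicity nor the normalization `h ∅ = 0` is part of the definition. -/
def IsSubmodular {G : Type*} [Add G] [LE G] (h : Finset ι → G) : Prop :=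
  ∀ S T, h (S ∪ T) + h (S ∩ T) ≤ h S + h T

namespace IsSubmodular

theorem insert_add_le {G : Type*} [AddCommMagma G] [LE G] {h : Finset ι → G}
    (hh : IsSubmodular h) {S T : Finset ι} (hST : S ⊆ T) {a : ι} (ha : a ∉ T) :
    h (insert a T) + h S ≤ h (insert a S) + h T := by
  have key := hh (insert a S) T
  rwa [insert_union, union_eq_right.mpr hST, insert_inter_of_notMem ha,
    inter_eq_left.mpr hST] at key

section OrderedGroup

variable {G : Type*} [AddCommGroup G] [PartialOrder G] [IsOrderedAddMonoid G] {h : Finset ι → G}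

theorem sum_powersetCard_add_choose_nsmul_le (hh : IsSubmodular h) {U : Finset ι} {a : ι}
    (ha : a ∉ U) (k : ℕ) :
    ∑ L ∈ U.powersetCard k, h L + (#U).choose k • (h (insert a U) - h U) ≤
      ∑ L ∈ U.powersetCard k, h (insert a L) := by
  rw [← card_powersetCard, ← sum_const, ← sum_add_distrib]
  refine sum_le_sum fun L hL => ?_
  rw [← add_sub_assoc, sub_le_iff_le_add, add_comm (h L)]
  exact hh.insert_add_le (mem_powersetCard.mp hL).1 ha

theorem choose_nsmul_le_sum_powersetCard (hh : IsSubmodular h) (h_empty : 0 ≤ h ∅) {n : ℕ}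
    (k : ℕ) {U : Finset ι} (hU : #U = n + 1) :
    n.choose k • h U ≤ ∑ L ∈ U.powersetCard (k + 1), h L := by
  induction n generalizing k U with
  | zero =>
    obtain ⟨a, rfl⟩ := card_eq_one.mp hU
    cases k with
    | zero => simp [powersetCard_one]
    | succ k => simp [powersetCard_eq_empty.mpr]
  | succ n ih =>
    obtain ⟨a, V, ha, rfl, hV⟩ := card_eq_succ.mp hU
    have pascal : (n + 1).choose k • h V ≤
        ∑ L ∈ V.powersetCard (k + 1), h L + ∑ L ∈ V.powersetCard k, h L := by
      cases k with
      | zero => simpa using add_le_add (ih 0 hV) h_empty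
      | succ k =>
        rw [Nat.choose_succ_succ', add_nsmul, add_comm]
        exact add_le_add (ih (k + 1) hV) (ih k hV)
    calc (n + 1).choose k • h (insert a V)
        = (n + 1).choose k • h V + (n + 1).choose k • (h (insert a V) - h V) := by
          rw [← nsmul_add, add_sub_cancel]
      _ ≤ ∑ L ∈ V.powersetCard (k + 1), h L +
            (∑ L ∈ V.powersetCard k, h L + (n + 1).choose k • (h (insert a V) - h V)) := by
          rw [← add_assoc]
          gcongr
      _ ≤ ∑ L ∈ V.powersetCard (k + 1), h L + ∑ L ∈ V.powersetCard k, h (insert a L) := by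
          gcongr
          exact hV ▸ hh.sum_powersetCard_add_choose_nsmul_le ha k
      _ = ∑ L ∈ (insert a V).powersetCard (k + 1), h L :=
          (sum_powersetCard_succ_insert ha k h).symm

end OrderedGroup

theorem div_card_le_average_powersetCard {K : Type*} [Field K] [LinearOrder K]
    [IsStrictOrderedRing K] {h : Finset ι → K} (hh : IsSubmodular h) (h_empty : 0 ≤ h ∅)
    {U : Finset ι} {k : ℕ} (hk : 1 ≤ k) (hkU : k ≤ #U) :
    h U / #U ≤ 1 / (#U).choose k * ∑ L ∈ U.powersetCard k, h L / k := by
  obtain ⟨k, rfl⟩ := Nat.exists_eq_add_of_le' hk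
  obtain ⟨n, hn⟩ := Nat.exists_eq_add_of_le' (hk.trans hkU)
  have key := hh.choose_nsmul_le_sum_powersetCard h_empty k hn
  have absorption : ((n + 1 : ℕ) : K) * n.choose k = (n + 1).choose (k + 1) * (k + 1 : ℕ) := by
    exact_mod_cast Nat.add_one_mul_choose_eq n k
  have choose_pos : (0 : K) < (n + 1).choose (k + 1) := by
    exact_mod_cast Nat.choose_pos (hn ▸ hkU)
  rw [hn, ← sum_div, one_div_mul_eq_div, div_div, div_le_div_iff₀ (by positivity) (by positivity),
    mul_comm ((k + 1 : ℕ) : K), ← absorption, mul_left_comm, mul_comm (∑ _ ∈ _, _)]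
  rw [nsmul_eq_mul, mul_comm] at key
  gcongr

end IsSubmodular

end SubmodularFunctions

section Gibbs

theorem negMulLog_le_sub_sub_mul_log {p q : ℝ} (hp : 0 ≤ p) (hq : 0 ≤ q) (hpq : q = 0 → p = 0) :
    negMulLog p ≤ q - p - p * log q := by
  rcases hq.eq_or_lt' with rfl | hq
  · simp [hpq rfl]
  calc negMulLog p = q * negMulLog (p / q) + p / q * negMulLog q := by
        rw [← negMulLog_mul, div_mul_cancel₀ p hq.ne']
    _ ≤ q * (1 - p / q) + p / q * negMulLog q := by
        gcongr
        exact negMulLog_le_one_sub_self (by positivity)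
    _ = q - p - p * log q := by
        rw [negMulLog]
        field_simp
        ring

theorem sum_negMulLog_le_neg_sum_mul_log {ι : Type*} {s : Finset ι} {p q : ι → ℝ}
    (hp : ∀ i ∈ s, 0 ≤ p i) (hq : ∀ i ∈ s, 0 ≤ q i) (hpq : ∀ i ∈ s, q i = 0 → p i = 0)
    (hsum : ∑ i ∈ s, q i ≤ ∑ i ∈ s, p i) :
    ∑ i ∈ s, negMulLog (p i) ≤ -∑ i ∈ s, p i * log (q i) := by
  have key := sum_le_sum fun i hi =>
    negMulLog_le_sub_sub_mul_log (hp i hi) (hq i hi) (hpq i hi)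
  simp only [sum_sub_distrib] at key
  linarith

theorem mul_log_mul_div {p r c m : ℝ} (hp : p ≠ 0 → r ≠ 0 ∧ c ≠ 0 ∧ m ≠ 0) :
    p * log (r * c / m) = p * log r + p * log c - p * log m := by
  by_cases hp0 : p = 0
  · simp [hp0]
  obtain ⟨hr, hc, hm⟩ := hp hp0
  rw [log_div (mul_ne_zero hr hc) hm, log_mul hr hc]
  ring

variable {α β : Type*} [Fintype α] [Fintype β] {p : α → β → ℝ}

theorem sum_mul_log_mul_div_of_marginals {r : α → ℝ} {c : β → ℝ} {m : ℝ}
    (hr : ∀ a, ∑ b, p a b = r a) (hc : ∀ b, ∑ a, p a b = c b) (hm : ∑ a, r a = m)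
    (hp : ∀ a b, p a b ≠ 0 → r a ≠ 0 ∧ c b ≠ 0 ∧ m ≠ 0) :
    ∑ a, ∑ b, p a b * log (r a * c b / m) =
      negMulLog m - ∑ a, negMulLog (r a) - ∑ b, negMulLog (c b) := by
  have row_log : ∑ a, ∑ b, p a b * log (r a) = -∑ a, negMulLog (r a) := by
    simp [negMulLog, ← sum_mul, hr]
  have col_log : ∑ a, ∑ b, p a b * log (c b) = -∑ b, negMulLog (c b) := by
    rw [sum_comm]
    simp [negMulLog, ← sum_mul, hc]
  have total_log : ∑ a, ∑ b, p a b * log m = -negMulLog m := by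
    simp [negMulLog, ← sum_mul, hr, hm]
  simp only [mul_log_mul_div (hp _ _), sum_add_distrib, sum_sub_distrib, row_log, col_log,
    total_log]
  ring

theorem sum_negMulLog_add_negMulLog_sum_le (hp : ∀ a b, 0 ≤ p a b) :
    ∑ a, ∑ b, negMulLog (p a b) + negMulLog (∑ a, ∑ b, p a b) ≤
      ∑ a, negMulLog (∑ b, p a b) + ∑ b, negMulLog (∑ a, p a b) := by
  set row : α → ℝ := fun a => ∑ b, p a b
  set col : β → ℝ := fun b => ∑ a, p a b
  set total : ℝ := ∑ a, row a
  have row_nonneg (a) : 0 ≤ row a := sum_nonneg fun b _ => hp a b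
  have col_nonneg (b) : 0 ≤ col b := sum_nonneg fun a _ => hp a b
  have total_nonneg : 0 ≤ total := sum_nonneg fun a _ => row_nonneg a
  have ne_zero (a b) (hab : p a b ≠ 0) : row a ≠ 0 ∧ col b ≠ 0 ∧ total ≠ 0 := by
    have hab := (hp a b).lt_of_ne' hab
    have row_pos : 0 < row a := sum_pos' (fun b _ => hp a b) ⟨b, mem_univ b, hab⟩
    have col_pos : 0 < col b := sum_pos' (fun a _ => hp a b) ⟨a, mem_univ a, hab⟩
    have total_pos : 0 < total := sum_pos' (fun a _ => row_nonneg a) ⟨a, mem_univ a, row_pos⟩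
    exact ⟨row_pos.ne', col_pos.ne', total_pos.ne'⟩
  have sum_product : ∑ a, ∑ b, row a * col b / total = total := by
    have sum_col : ∑ b, col b = total := sum_comm
    simp only [← sum_div, ← Fintype.sum_mul_sum, sum_col]
    exact mul_self_div_self total
  have gibbs := sum_negMulLog_le_neg_sum_mul_log (s := univ) (p := fun x : α × β => p x.1 x.2)
    (q := fun x => row x.1 * col x.2 / total) (fun x _ => hp x.1 x.2)
    (fun x _ => div_nonneg (mul_nonneg (row_nonneg _) (col_nonneg _)) total_nonneg)
    (fun x _ => by
      contrapose!
      intro hx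
      obtain ⟨hr, hc, ht⟩ := ne_zero _ _ hx
      exact div_ne_zero (mul_ne_zero hr hc) ht)
    (by simp only [Fintype.sum_prod_type, sum_product, total, row, le_refl])
  have cross_entropy := sum_mul_log_mul_div_of_marginals (r := row) (c := col) (fun _ => rfl)
    (fun _ => rfl) rfl ne_zero
  simp only [Fintype.sum_prod_type] at gibbs
  linarith

end Gibbs

section Entropy

variable {Ω : Type*} [MeasurableSpace Ω] {μ : Measure Ω}
  {α β γ : Type*} [Fintype α] [Fintype β] [Fintype γ] {X : Ω → α} {Y : Ω → β} {Z : Ω → γ}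

theorem Hent_eq_sum_negMulLog (μ : Measure Ω) (X : Ω → α) :
    Hent μ X = ∑ x, negMulLog (μ.real (X ⁻¹' {x})) := by
  simp [Hent, negMulLog, measureReal_def]

theorem Hent_nonneg [IsZeroOrProbabilityMeasure μ] : 0 ≤ Hent μ X := by
  rw [Hent_eq_sum_negMulLog]
  exact sum_nonneg fun x _ => negMulLog_nonneg measureReal_nonneg measureReal_le_one

theorem Hent_comp_of_injective {f : α → β} (hf : f.Injective) :
    Hent μ (fun ω => f (X ω)) = Hent μ X := by
  simp only [Hent_eq_sum_negMulLog]
  refine (Fintype.sum_of_injective f hf _ _ (fun y hy => ?_) fun x => ?_).symm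
  · have preimage_empty : (fun ω => f (X ω)) ⁻¹' {y} = ∅ :=
      Set.preimage_singleton_eq_empty.mpr fun ⟨ω, hω⟩ => hy ⟨X ω, hω⟩
    simp [preimage_empty]
  · congr 2
    ext ω
    simp [hf.eq_iff]

theorem sum_measureReal_inter_preimage_singleton [IsFiniteMeasure μ] [MeasurableSpace β]
    [MeasurableSingletonClass β] (hY : Measurable Y) (A : Set Ω) :
    ∑ y, μ.real (A ∩ Y ⁻¹' {y}) = μ.real A := by
  have fibres := sum_measureReal_preimage_singleton (μ := μ.restrict A) univ
    fun y _ => hY (measurableSet_singleton y)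
  simpa [measureReal_restrict_apply (hY (measurableSet_singleton _)), Set.inter_comm] using fibres

variable [MeasurableSpace γ] [MeasurableSingletonClass γ]

theorem Hent_prodMk_eq_sum_restrict (X : Ω → α) (hZ : Measurable Z) :
    Hent μ (fun ω => (X ω, Z ω)) = ∑ z, Hent (μ.restrict (Z ⁻¹' {z})) X := by
  simp only [Hent_eq_sum_negMulLog, Fintype.sum_prod_type_right, ← Set.singleton_prod_singleton,
    Set.mk_preimage_prod, measureReal_restrict_apply' (hZ (measurableSet_singleton _))]

variable [MeasurableSpace α] [MeasurableSingletonClass α] [MeasurableSpace β]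
  [MeasurableSingletonClass β] [IsFiniteMeasure μ]

theorem Hent_prodMk_add_negMulLog_le (hX : Measurable X) (hY : Measurable Y) :
    Hent μ (fun ω => (X ω, Y ω)) + negMulLog (μ.real Set.univ) ≤ Hent μ X + Hent μ Y := by
  have key := sum_negMulLog_add_negMulLog_sum_le
    fun x y => measureReal_nonneg (μ := μ) (s := X ⁻¹' {x} ∩ Y ⁻¹' {y})
  have row_sum (x) := sum_measureReal_inter_preimage_singleton (μ := μ) hY (X ⁻¹' {x})
  have col_sum (y) := sum_measureReal_inter_preimage_singleton (μ := μ) hX (Y ⁻¹' {y})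
  have total := sum_measureReal_inter_preimage_singleton (μ := μ) hX Set.univ
  simp only [Set.inter_comm (Y ⁻¹' _), Set.univ_inter] at col_sum total
  simpa only [row_sum, col_sum, total, Hent_eq_sum_negMulLog, Fintype.sum_prod_type,
    ← Set.singleton_prod_singleton, Set.mk_preimage_prod] using key

theorem Hent_strong_subadditive (hX : Measurable X) (hY : Measurable Y) (hZ : Measurable Z) :
    Hent μ (fun ω => ((X ω, Y ω), Z ω)) + Hent μ Z ≤
      Hent μ (fun ω => (X ω, Z ω)) + Hent μ (fun ω => (Y ω, Z ω)) := by
  rw [Hent_eq_sum_negMulLog μ Z]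
  simp only [Hent_prodMk_eq_sum_restrict _ hZ, ← sum_add_distrib]
  refine sum_le_sum fun z _ => ?_
  rw [← measureReal_restrict_apply_univ]
  exact Hent_prodMk_add_negMulLog_le hX hY

end Entropy

theorem isSubmodular_Hent_restrict {Ω : Type*} [MeasurableSpace Ω] {μ : Measure Ω}
    [IsFiniteMeasure μ] {ι : Type*} [DecidableEq ι] {ζ : ι → Type*} [∀ i, Fintype (ζ i)]
    [∀ i, MeasurableSpace (ζ i)] [∀ i, MeasurableSingletonClass (ζ i)] {Z : ∀ i, Ω → ζ i}
    (hZ : ∀ i, Measurable (Z i)) :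
    IsSubmodular fun S : Finset ι => Hent μ (fun ω => S.restrict (Z · ω)) := by
  intro S T
  have measurable_restrict (R : Finset ι) : Measurable fun ω => R.restrict (Z · ω) :=
    measurable_pi_lambda _ fun i => hZ i
  have key := Hent_strong_subadditive (μ := μ) (measurable_restrict S) (measurable_restrict T)
    (measurable_restrict (S ∩ T))
  have union_eq : Hent μ (fun ω => ((S.restrict (Z · ω), T.restrict (Z · ω)),
      (S ∩ T).restrict (Z · ω))) = Hent μ (fun ω => (S ∪ T).restrict (Z · ω)) := by
    refine Hent_comp_of_injective (X := fun ω => (S ∪ T).restrict (Z · ω))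
      (f := fun z => ((restrict₂ subset_union_left z, restrict₂ subset_union_right z),
        restrict₂ (inter_subset_left.trans subset_union_left) z)) ?_
    intro z z' h
    simp only [Prod.mk.injEq] at h
    obtain ⟨⟨eq_on_S, eq_on_T⟩, -⟩ := h
    funext ⟨i, hi⟩
    rcases mem_union.mp hi with hiS | hiT
    · exact congrFun eq_on_S ⟨i, hiS⟩
    · exact congrFun eq_on_T ⟨i, hiT⟩
  have left_eq : Hent μ (fun ω => (S.restrict (Z · ω), (S ∩ T).restrict (Z · ω))) =
      Hent μ (fun ω => S.restrict (Z · ω)) :=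
    Hent_comp_of_injective (X := fun ω => S.restrict (Z · ω))
      (f := fun z => (z, restrict₂ inter_subset_left z)) fun _ _ h => congrArg Prod.fst h
  have right_eq : Hent μ (fun ω => (T.restrict (Z · ω), (S ∩ T).restrict (Z · ω))) =
      Hent μ (fun ω => T.restrict (Z · ω)) :=
    Hent_comp_of_injective (X := fun ω => T.restrict (Z · ω))
      (f := fun z => (z, restrict₂ inter_subset_right z)) fun _ _ h => congrArg Prod.fst h
  rwa [union_eq, left_eq, right_eq] at key

theorem han_inequality_general {Ω : Type*} [MeasurableSpace Ω] (μ : Measure Ω)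
    [IsProbabilityMeasure μ] {ι : Type*} [Fintype ι] [DecidableEq ι] {ℓ : ℕ} (hℓ : 1 ≤ ℓ)
    (hι : ℓ ≤ Fintype.card ι) {ζ : ι → Type*} [∀ i, Fintype (ζ i)] [∀ i, MeasurableSpace (ζ i)]
    [∀ i, MeasurableSingletonClass (ζ i)] {Z : ∀ i, Ω → ζ i} (hZ : ∀ i, Measurable (Z i)) :
    Hent μ (fun ω => fun i => Z i ω) / Fintype.card ι ≤
      1 / (Fintype.card ι).choose ℓ *
        ∑ L ∈ powersetCard ℓ (univ : Finset ι), Hent μ (fun ω => fun i : L => Z i.1 ω) / ℓ := by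
  have univ_eq : Hent μ (fun ω => (univ : Finset ι).restrict (Z · ω)) =
      Hent μ (fun ω => fun i => Z i ω) :=
    Hent_comp_of_injective (X := fun ω => fun i => Z i ω)
      fun _ _ h => funext fun i => congrFun h ⟨i, mem_univ i⟩
  rw [← univ_eq]
  exact (isSubmodular_Hent_restrict hZ).div_card_le_average_powersetCard Hent_nonneg hℓ hι

/-- Han's inequality in the averaged form used in the converse of Theorem 1:
the average over all `ℓ`-subsets `L` of `H(Z_L)/ℓ` is at least `H(Z₁,…,Z_N)/N`. -/
theorem han_inequality
    {Ω : Type*} [MeasurableSpace Ω] (μ : Measure Ω) [IsProbabilityMeasure μ]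
    {N ℓ : ℕ} (hℓ : 1 ≤ ℓ) (hN : ℓ ≤ N)
    {ζ : Fin N → Type*} [∀ i, Fintype (ζ i)] [∀ i, MeasurableSpace (ζ i)]
    [∀ i, MeasurableSingletonClass (ζ i)]
    (Z : ∀ i, Ω → ζ i) (hZ : ∀ i, Measurable (Z i)) :
    (1 / (N.choose ℓ : ℝ)) *
        ∑ L ∈ Finset.powersetCard ℓ (Finset.univ : Finset (Fin N)),
          Hent μ (fun ω => fun i : L => Z i.1 ω) / (ℓ : ℝ)
      ≥ Hent μ (fun ω => fun i => Z i ω) / (N : ℝ) := by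
  simpa using han_inequality_general μ hℓ (by simpa) hZ
end

section
/- Let F be a field, N > ℓ ≥ 1 and a, n ≥ 1 integers, and let x_{i_1}, ..., x_{i_ℓ} be distinct nonzero elements of F. Fix matrices A_1, ..., A_{N−ℓ} ∈ F^{a×n}. Then the map sending a key tuple (K_1, ..., K_ℓ) ∈ (F^{a×n})^ℓ to the share tuple (Ã(x_{i_1}), ..., Ã(x_{i_ℓ})), where Ã(x) = ∑_{j=1}^{N−ℓ} A_j x^{j−1} + ∑_{k=1}^{ℓ} K_k x^{k+(N−ℓ)−1}, is a bijection from (F^{a×n})^ℓ to (F^{a×n})^ℓ. -/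
/-!
The map is affine in the keys, and its linear part is the matrix `(x_t ^ (k + m))`, `m = N - ℓ`,
acting on tuples. This matrix is the diagonal matrix of the `x_t ^ m` times the Vandermonde matrix
of `x`, so it is invertible as soon as the points and their differences are units. An invertible
matrix over `R` acts bijectively on the tuples of any `R`-module, so neither the field nor the
matrix shape of the keys matters.
-/

section ShiftedVandermonde

open Matrix

variable {R : Type*} [CommRing R] {n : ℕ}

theorem isUnit_vandermonde {v : Fin n → R} (hv : Pairwise fun i j => IsUnit (v i - v j)) :
    IsUnit (vandermonde v) := by
  rw [isUnit_iff_isUnit_det, det_vandermonde]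
  simp only [IsUnit.prod_iff, Finset.mem_Ioi]
  exact fun i _ j hij => hv hij.ne.symm

/-- The Vandermonde matrix of `v` with all exponents raised by `m`. For `m = N - ℓ` it is the
coefficient matrix of the keys in the shares. -/
def shiftedVandermonde (v : Fin n → R) (m : ℕ) : Matrix (Fin n) (Fin n) R :=
  of fun t k => v t ^ ((k : ℕ) + m)

theorem shiftedVandermonde_eq_diagonal_mul (v : Fin n → R) (m : ℕ) :
    shiftedVandermonde v m = diagonal (fun t => v t ^ m) * vandermonde v := by
  ext t k
  rw [shiftedVandermonde, of_apply, diagonal_mul, vandermonde_apply, pow_add, mul_comm]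

theorem isUnit_shiftedVandermonde {v : Fin n → R}
    (hv : Pairwise fun i j => IsUnit (v i - v j)) (hv_unit : ∀ t, IsUnit (v t)) (m : ℕ) :
    IsUnit (shiftedVandermonde v m) := by
  have hdiag : IsUnit (diagonal fun t => v t ^ m) :=
    isUnit_diagonal.mpr (Pi.isUnit_iff.mpr fun t => (hv_unit t).pow m)
  rw [shiftedVandermonde_eq_diagonal_mul]
  exact hdiag.mul (isUnit_vandermonde hv)

end ShiftedVandermonde

open scoped Matrix.Module in
theorem bijective_add_sum_smul_of_isUnit {R M ι : Type*} [Ring R] [AddCommGroup M] [Module R M]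
    [Fintype ι] [DecidableEq ι] {P : Matrix ι ι R} (hP : IsUnit P) (b : ι → M) :
    Function.Bijective fun (K : ι → M) (t : ι) => b t + ∑ k, P t k • K k := by
  have hsmul : Function.Bijective fun K : ι → M => P • K := hP.smul_bijective
  exact (AddGroup.addLeft_bijective b).comp hsmul

theorem one_sided_key_bijective_general
    {R M : Type*} [CommRing R] [AddCommGroup M] [Module R M] {ℓ m : ℕ}
    (x : Fin ℓ → R) (hx : Pairwise fun i j => IsUnit (x i - x j)) (hx_unit : ∀ t, IsUnit (x t))
    (A : Fin m → M) :
    Function.Bijective (fun K : Fin ℓ → M =>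
      fun t : Fin ℓ =>
        (∑ j : Fin m, x t ^ (j : ℕ) • A j)
          + ∑ k : Fin ℓ, x t ^ ((k : ℕ) + m) • K k) :=
  bijective_add_sum_smul_of_isUnit (isUnit_shiftedVandermonde hx hx_unit m)
    fun t => ∑ j : Fin m, x t ^ (j : ℕ) • A j

/-- Bijectivity of the key-to-shares map for the one-sided secure scheme: for any fixed
blocks `A₁, …, A_{N-ℓ}` and distinct nonzero evaluation points `x_{i₁}, …, x_{i_ℓ}`, the map
`(K₁, …, K_ℓ) ↦ (Ã(x_{i₁}), …, Ã(x_{i_ℓ}))`, where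
`Ã(x) = ∑_{j=1}^{N-ℓ} A_j x^{j-1} + ∑_{k=1}^{ℓ} K_k x^{k+(N-ℓ)-1}`, is a bijection from
`(F^{a×n})^ℓ` to itself. -/
theorem one_sided_key_bijective
    {F : Type*} [Field F] {N ℓ a n : ℕ}
    (hℓ : 1 ≤ ℓ) (hN : ℓ < N) (ha : 1 ≤ a) (hn : 1 ≤ n)
    (x : Fin ℓ → F) (hx : Function.Injective x) (hx0 : ∀ t, x t ≠ 0)
    (A : Fin (N - ℓ) → Matrix (Fin a) (Fin n) F) :
    Function.Bijective (fun K : Fin ℓ → Matrix (Fin a) (Fin n) F =>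
      fun t : Fin ℓ =>
        (∑ j : Fin (N - ℓ), x t ^ (j : ℕ) • A j)
          + ∑ k : Fin ℓ, x t ^ ((k : ℕ) + (N - ℓ)) • K k) := by
  have hx_sub : Pairwise fun i j => IsUnit (x i - x j) :=
    fun _ _ hij => (sub_ne_zero.mpr (hx.ne hij)).isUnit
  exact one_sided_key_bijective_general x hx_sub (fun t => (hx0 t).isUnit) A
end

section
/- (Theorem 1, achievability, as an existence statement.) Let N > ℓ ≥ 1 be integers, let F be a field with at least N + 1 elements, and let m, n, p ≥ 1 with (N − ℓ) dividing m; write a = m/(N − ℓ). Then there exist encoding functions f_i : F^{m×n} × (F^{a×n})^{ℓ} → F^{a×n} for i = 1, ..., N and a decoding function d : (F^{a×p})^{N} → F^{m×p} such that: (decodability) for every A ∈ F^{m×n}, every B ∈ F^{n×p}, and every key tuple K ∈ (F^{a×n})^{ℓ}, d(f_1(A,K)·B, ..., f_N(A,K)·B) = A·B; and (security) for every subset L ⊆ {1,...,N} with |L| = ℓ and every A ∈ F^{m×n}, the map K ↦ (f_i(A,K))_{i∈L} is a bijection from (F^{a×n})^{ℓ} to (F^{a×n})^{ℓ}. -/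
/-!
Cut `A` into `N - ℓ` blocks of rows and apply an invertible `N × N` matrix `G` to the tuple formed
by the `ℓ` keys and the blocks; server `i` receives the `i`-th entry. Right multiplication by `B`
is linear, so it commutes with `G`, and applying `G⁻¹` to the answers returns the blocks of `A * B`.
The shares of `ℓ` servers are an affine function of the keys, whose linear part is the submatrix of
`G` on their rows and the key columns. If `G` is a Vandermonde matrix and the keys take its first
`ℓ` columns, these submatrices are again Vandermonde matrices, hence invertible.
-/

section RowBlocks

variable {R α β μ ν π : Type*}

/-- The partition of a matrix into blocks of rows: under `r : β × α ≃ μ`, row `s` of block `j` is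
row `r (j, s)` of the matrix. -/
def rowBlocks (r : β × α ≃ μ) : Matrix μ ν R ≃ (β → Matrix α ν R) where
  toFun A j := A.submatrix (fun s => r (j, s)) id
  invFun X := Matrix.of fun i c => X (r.symm i).1 (r.symm i).2 c
  left_inv A := by ext; simp
  right_inv X := by ext; simp

lemma rowBlocks_mul [Fintype ν] [NonUnitalNonAssocSemiring R] (r : β × α ≃ μ) (A : Matrix μ ν R)
    (B : Matrix ν π R) : rowBlocks r (A * B) = fun j => rowBlocks r A j * B :=
  rfl

end RowBlocks

section Shares

open scoped Matrix.Module

variable {R M M' σ κ β τ : Type*} [Ring R] [AddCommGroup M] [Module R M]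
  [AddCommGroup M'] [Module R M'] [Fintype σ] [DecidableEq σ]

/-- The shares of a linear secret sharing scheme with generator matrix `G`: the matrix `G` applied
to the keys `K` and the data `X`. The equivalence `e` says which columns of `G` multiply keys and
which multiply data. -/
def shares (G : Matrix σ σ R) (e : κ ⊕ β ≃ σ) (K : κ → M) (X : β → M) : σ → M :=
  G • (Sum.elim K X ∘ e.symm)

/-- The reconstruction map of a linear secret sharing scheme, which inverts the generator matrix
and discards the keys. -/
def reconstruct (G : (Matrix σ σ R)ˣ) (e : κ ⊕ β ≃ σ) (Y : σ → M) : β → M :=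
  (G⁻¹ • Y) ∘ e ∘ Sum.inr

lemma reconstruct_shares (G : (Matrix σ σ R)ˣ) (e : κ ⊕ β ≃ σ) (K : κ → M) (X : β → M) :
    reconstruct G e (shares G.val e K X) = X := by
  rw [reconstruct, shares, ← Units.smul_def, inv_smul_smul]
  ext
  simp

lemma map_comp_shares (φ : M →ₗ[R] M') (G : Matrix σ σ R) (e : κ ⊕ β ≃ σ) (K : κ → M)
    (X : β → M) : φ ∘ shares G e K X = shares G e (φ ∘ K) (φ ∘ X) := by
  rw [shares, shares, ← Sum.comp_elim]
  exact map_smul (φ.mapMatrixModule σ) G _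

lemma reconstruct_shares_mul {α ν π : Type*} [Fintype ν] (G : (Matrix σ σ R)ˣ) (e : κ ⊕ β ≃ σ)
    (K : κ → Matrix α ν R) (X : β → Matrix α ν R) (B : Matrix ν π R) :
    reconstruct G e (fun i => shares G.val e K X i * B) = fun j => X j * B := by
  let mulB : Matrix α ν R →ₗ[R] Matrix α π R := mulRightLinearMap α R B
  calc reconstruct G e (mulB ∘ shares G.val e K X)
      = reconstruct G e (shares G.val e (mulB ∘ K) (mulB ∘ X)) := by rw [map_comp_shares]
    _ = mulB ∘ X := reconstruct_shares G e _ _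

variable [Fintype κ] [DecidableEq κ]

lemma shares_comp_eq_smul_add (G : Matrix σ σ R) (e : κ ⊕ β ≃ σ) (t : κ → σ) (K : κ → M)
    (X : β → M) :
    shares G e K X ∘ t = G.submatrix t (e ∘ Sum.inl) • K + shares G e 0 X ∘ t := by
  have : Fintype β := Fintype.ofInjective _ (e.injective.comp Sum.inr_injective)
  ext k
  simp [shares, ← e.sum_comp, Fintype.sum_sum_type]

lemma bijective_shares_restrict {G : Matrix σ σ R} {e : κ ⊕ β ≃ σ} {t : τ → σ} (g : κ ≃ τ)
    (hG : IsUnit (G.submatrix (t ∘ g) (e ∘ Sum.inl))) (X : β → M) :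
    Function.Bijective fun (K : κ → M) i => shares G e K X (t i) := by
  have affine : (fun K : κ → M => shares G e K X ∘ (t ∘ g)) =
      (· + shares G e 0 X ∘ (t ∘ g)) ∘ (G.submatrix (t ∘ g) (e ∘ Sum.inl) • ·) :=
    funext fun K => shares_comp_eq_smul_add G e (t ∘ g) K X
  rw [← (g.arrowCongr (Equiv.refl M)).symm.bijective.of_comp_iff']
  change Function.Bijective fun K : κ → M => shares G e K X ∘ (t ∘ g)
  rw [affine]
  exact (Equiv.addRight _).bijective.comp hG.smul_bijective

end Shares

lemma isUnit_vandermonde_s8 {R : Type*} [CommRing R] {k : ℕ} {x : Fin k → R}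
    (hx : Pairwise fun i j => IsUnit (x i - x j)) : IsUnit (Matrix.vandermonde x) := by
  rw [Matrix.isUnit_iff_isUnit_det, Matrix.det_vandermonde]
  simp only [IsUnit.prod_iff, Finset.mem_univ, Finset.mem_Ioi, forall_const]
  exact fun i j hij => hx hij.ne'

theorem one_sided_scheme_exists_general
    {R : Type*} [CommRing R] {N ℓ m n p : ℕ} (hN : ℓ < N) {x : Fin N → R}
    (hx : Pairwise fun i j => IsUnit (x i - x j)) (hdvd : (N - ℓ) ∣ m) :
    ∃ (f : Fin N → Matrix (Fin m) (Fin n) R →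
          (Fin ℓ → Matrix (Fin (m / (N - ℓ))) (Fin n) R) →
          Matrix (Fin (m / (N - ℓ))) (Fin n) R)
      (d : (Fin N → Matrix (Fin (m / (N - ℓ))) (Fin p) R) → Matrix (Fin m) (Fin p) R),
      (∀ (A : Matrix (Fin m) (Fin n) R) (B : Matrix (Fin n) (Fin p) R)
          (K : Fin ℓ → Matrix (Fin (m / (N - ℓ))) (Fin n) R),
          d (fun i => f i A K * B) = A * B) ∧
      (∀ L : Finset (Fin N), L.card = ℓ →
        ∀ A : Matrix (Fin m) (Fin n) R,
          Function.Bijective (fun K : Fin ℓ → Matrix (Fin (m / (N - ℓ))) (Fin n) R =>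
            fun i : L => f i.1 A K)) := by
  let r : Fin (N - ℓ) × Fin (m / (N - ℓ)) ≃ Fin m :=
    finProdFinEquiv.trans (finCongr (Nat.mul_div_cancel' hdvd))
  let e : Fin ℓ ⊕ Fin (N - ℓ) ≃ Fin N :=
    finSumFinEquiv.trans (finCongr (Nat.add_sub_cancel' hN.le))
  obtain ⟨G, hG⟩ := isUnit_vandermonde_s8 hx
  refine ⟨fun i A K => shares G.val e K (rowBlocks r A) i,
    fun Y => (rowBlocks r).symm (reconstruct G e Y), fun A B K => ?_, fun L hL A => ?_⟩
  · rw [Equiv.symm_apply_eq, rowBlocks_mul]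
    exact reconstruct_shares_mul G e K (rowBlocks r A) B
  · let g : Fin ℓ ≃ L := (L.equivFinOfCardEq hL).symm
    have minor_eq : G.val.submatrix (Subtype.val ∘ g) (e ∘ Sum.inl) =
        Matrix.vandermonde fun k => x (g k) := by
      rw [hG]
      rfl
    refine bijective_shares_restrict g ?_ (rowBlocks r A)
    rw [minor_eq]
    exact isUnit_vandermonde_s8 (hx.comp_of_injective (Subtype.val_injective.comp g.injective))

/-- Theorem 1, achievability, as an existence statement: for `N > ℓ ≥ 1`, a field `F`
with at least `N + 1` elements, and `(N - ℓ) ∣ m` with `a = m / (N - ℓ)`, there exist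
encodings `fᵢ : F^{m×n} × (F^{a×n})^ℓ → F^{a×n}` and a decoder
`d : (F^{a×p})^N → F^{m×p}` such that `d` recovers `A·B` from the server answers
`fᵢ(A,K)·B`, and for every `ℓ`-subset `L` of servers and every `A`, the map
`K ↦ (fᵢ(A,K))_{i∈L}` is a bijection of `(F^{a×n})^ℓ` (so the colluding shares reveal
nothing about `A`). -/
theorem one_sided_scheme_exists
    {F : Type*} [Field F] {N ℓ m n p : ℕ}
    (hℓ : 1 ≤ ℓ) (hN : ℓ < N) (hm : 1 ≤ m) (hn : 1 ≤ n) (hp : 1 ≤ p)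
    (hF : ∃ e : Fin (N + 1) → F, Function.Injective e)
    (hdvd : (N - ℓ) ∣ m) :
    ∃ (f : Fin N → Matrix (Fin m) (Fin n) F →
          (Fin ℓ → Matrix (Fin (m / (N - ℓ))) (Fin n) F) →
          Matrix (Fin (m / (N - ℓ))) (Fin n) F)
      (d : (Fin N → Matrix (Fin (m / (N - ℓ))) (Fin p) F) → Matrix (Fin m) (Fin p) F),
      (∀ (A : Matrix (Fin m) (Fin n) F) (B : Matrix (Fin n) (Fin p) F)
          (K : Fin ℓ → Matrix (Fin (m / (N - ℓ))) (Fin n) F),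
          d (fun i => f i A K * B) = A * B) ∧
      (∀ L : Finset (Fin N), L.card = ℓ →
        ∀ A : Matrix (Fin m) (Fin n) F,
          Function.Bijective (fun K : Fin ℓ → Matrix (Fin (m / (N - ℓ))) (Fin n) F =>
            fun i : L => f i.1 A K)) := by
  obtain ⟨e, he⟩ := hF
  have isUnit_sub : Pairwise fun i j : Fin N => IsUnit (e i.castSucc - e j.castSucc) :=
    fun i j hij => (sub_ne_zero.2 (he.ne ((Fin.castSucc_injective N).ne hij))).isUnit
  exact one_sided_scheme_exists_general hN isUnit_sub hdvd
end

section
/- Let F be a field and r, ℓ ≥ 1 integers. Let A_1, ..., A_r, K_{A_1}, ..., K_{A_ℓ} ∈ F^{a×n} and B_1, ..., B_r, K_{B_1}, ..., K_{B_ℓ} ∈ F^{n×b}, and define the matrix-coefficient polynomials Ã(x) = ∑_{j=1}^{r} A_j x^{j−1} + ∑_{k=1}^{ℓ} K_{A_k} x^{k+r−1} and B̃(x) = ∑_{j'=1}^{r} B_{j'} x^{(j'−1)(r+ℓ)} + ∑_{k=1}^{ℓ} K_{B_k} x^{(k+r−1)(r+ℓ)}. Then the product polynomial h(x) = Ã(x)·B̃(x)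 has degree at most (r+ℓ)² − 1, and for all 1 ≤ j, j' ≤ r, the coefficient of x^{(j−1) + (j'−1)(r+ℓ)} in h equals exactly A_j·B_{j'} (no other term of the product contributes to that degree). -/
/-!
With `N = r + ℓ`, concatenating data and key blocks turns the two encodings into
`Ã = ∑_{p < N} P_p x^p` and `B̃ = ∑_{q < N} Q_q x^{qN}`, so that
`Ã B̃ = ∑_{p, q < N} P_p Q_q x^{p + qN}`. As `p + qN` takes every value `k < N²` exactly once, with
`p = k % N` and `q = k / N`, this is the polynomial `∑_{k < N²} P_{k % N} Q_{k / N} x^k`, each of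
whose coefficients is a single product of a data or key block with a data or key block.
-/

open Polynomial

/-- The fully secure encoding polynomial for the `A` side, as a matrix with polynomial
entries: `Ã(x) = ∑_{j=1}^{r} A_j x^{j-1} + ∑_{k=1}^{ℓ} K_{A_k} x^{k+r-1}`. -/
noncomputable def encApoly {F : Type*} [Field F] {a n r ℓ : ℕ}
    (A : Fin r → Matrix (Fin a) (Fin n) F) (KA : Fin ℓ → Matrix (Fin a) (Fin n) F) :
    Matrix (Fin a) (Fin n) (Polynomial F) :=
  (∑ j : Fin r, (X ^ (j : ℕ) : Polynomial F) • (A j).map C)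
    + ∑ k : Fin ℓ, (X ^ ((k : ℕ) + r) : Polynomial F) • (KA k).map C

/-- The fully secure encoding polynomial for the `B` side:
`B̃(x) = ∑_{j'=1}^{r} B_{j'} x^{(j'-1)(r+ℓ)} + ∑_{k=1}^{ℓ} K_{B_k} x^{(k+r-1)(r+ℓ)}`. -/
noncomputable def encBpoly {F : Type*} [Field F] {n b r ℓ : ℕ}
    (B : Fin r → Matrix (Fin n) (Fin b) F) (KB : Fin ℓ → Matrix (Fin n) (Fin b) F) :
    Matrix (Fin n) (Fin b) (Polynomial F) :=
  (∑ j : Fin r, (X ^ ((j : ℕ) * (r + ℓ)) : Polynomial F) • (B j).map C)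
    + ∑ k : Fin ℓ, (X ^ (((k : ℕ) + r) * (r + ℓ)) : Polynomial F) • (KB k).map C

section StridedPoly

variable {R l m n : Type*} [Semiring R] {M N : ℕ}

/-- The polynomial `∑_{k < N} P_k x^{kd}` with matrix coefficients, encoded as a matrix of
polynomials. Both encodings of the scheme, and their product, have this form. -/
noncomputable def stridedPoly (d : ℕ) (P : Fin N → Matrix l m R) : Matrix l m R[X] :=
  ∑ k, (P k).map (monomial (k * d))

theorem stridedPoly_apply (d : ℕ) (P : Fin N → Matrix l m R) (i : l) (j : m) :
    stridedPoly d P i j = ∑ k : Fin N, monomial (k * d) (P k i j) := by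
  simp [stridedPoly, Matrix.sum_apply]

theorem natDegree_stridedPoly_apply_le (d : ℕ) (P : Fin N → Matrix l m R) (i : l) (j : m) :
    (stridedPoly d P i j).natDegree ≤ (N - 1) * d := by
  rw [stridedPoly_apply]
  exact natDegree_sum_le_of_forall_le _ _ fun k _ =>
    (natDegree_monomial_le _).trans (Nat.mul_le_mul_right d (Nat.le_sub_one_of_lt k.is_lt))

theorem map_coeff_stridedPoly {d : ℕ} (hd : d ≠ 0) (P : Fin N → Matrix l m R) (k : Fin N) :
    (stridedPoly d P).map (coeff · (k * d)) = P k := by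
  ext i j
  simp [stridedPoly_apply, finsetSum_coeff, coeff_monomial, hd, Fin.val_inj]

theorem map_monomial_mul_map_monomial [Fintype m] (A : Matrix l m R) (B : Matrix m n R)
    (s t : ℕ) : A.map (monomial s) * B.map (monomial t) = (A * B).map (monomial (s + t)) := by
  ext1 i j
  simp [Matrix.mul_apply, monomial_mul_monomial]

theorem divNat_finProdFinEquiv (x : Fin M × Fin N) : (finProdFinEquiv x).divNat = x.1 :=
  congrArg Prod.fst (finProdFinEquiv.symm_apply_apply x)

theorem modNat_finProdFinEquiv (x : Fin M × Fin N) : (finProdFinEquiv x).modNat = x.2 :=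
  congrArg Prod.snd (finProdFinEquiv.symm_apply_apply x)

theorem stridedPoly_one_mul_stridedPoly [Fintype m] (P : Fin N → Matrix l m R)
    (Q : Fin M → Matrix m n R) :
    stridedPoly 1 P * stridedPoly N Q =
      stridedPoly 1 fun k : Fin (M * N) => P k.modNat * Q k.divNat := by
  calc
    stridedPoly 1 P * stridedPoly N Q =
        ∑ q : Fin M, ∑ p : Fin N, (P p * Q q).map (monomial (p + q * N)) := by
        simp only [stridedPoly, Matrix.sum_mul, Matrix.mul_sum, map_monomial_mul_map_monomial,
          mul_one]
    _ = ∑ x : Fin M × Fin N, (P x.2 * Q x.1).map (monomial (x.2 + x.1 * N)) :=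
        (Fintype.sum_prod_type' _).symm
    _ = stridedPoly 1 fun k : Fin (M * N) => P k.modNat * Q k.divNat :=
        Fintype.sum_equiv finProdFinEquiv _ _ fun x => by
          simp [divNat_finProdFinEquiv, modNat_finProdFinEquiv, mul_comm N]

theorem fully_secure_degree_separation_general [Fintype m] (P : Fin N → Matrix l m R)
    (Q : Fin M → Matrix m n R) :
    (∀ i j, ((stridedPoly 1 P * stridedPoly N Q) i j).natDegree ≤ M * N - 1) ∧
      ∀ (s : Fin N) (t : Fin M),
        (stridedPoly 1 P * stridedPoly N Q).map (coeff · (s + t * N)) = P s * Q t := by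
  rw [stridedPoly_one_mul_stridedPoly]
  refine ⟨fun i j => by simpa using natDegree_stridedPoly_apply_le 1 _ i j, fun s t => ?_⟩
  simpa [divNat_finProdFinEquiv, modNat_finProdFinEquiv, mul_comm N] using
    map_coeff_stridedPoly one_ne_zero (fun k => P k.modNat * Q k.divNat) (finProdFinEquiv (t, s))

end StridedPoly

theorem encApoly_eq_stridedPoly {F : Type*} [Field F] {a n r ℓ : ℕ}
    (A : Fin r → Matrix (Fin a) (Fin n) F) (KA : Fin ℓ → Matrix (Fin a) (Fin n) F) :
    encApoly A KA = stridedPoly 1 (Fin.append A KA) := by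
  ext1 i j
  simp [encApoly, stridedPoly_apply, Fin.sum_univ_add, Matrix.add_apply, Matrix.sum_apply,
    X_pow_mul_C, C_mul_X_pow_eq_monomial, add_comm]

theorem encBpoly_eq_stridedPoly {F : Type*} [Field F] {n b r ℓ : ℕ}
    (B : Fin r → Matrix (Fin n) (Fin b) F) (KB : Fin ℓ → Matrix (Fin n) (Fin b) F) :
    encBpoly B KB = stridedPoly (r + ℓ) (Fin.append B KB) := by
  ext1 i j
  simp [encBpoly, stridedPoly_apply, Fin.sum_univ_add, Matrix.add_apply, Matrix.sum_apply,
    X_pow_mul_C, C_mul_X_pow_eq_monomial, add_comm]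

/-- Degree separation in the fully secure scheme (equation (20)): the product polynomial
`h(x) = Ã(x)·B̃(x)` has degree at most `(r+ℓ)² - 1`, and for all `1 ≤ j, j' ≤ r` the
coefficient of `x^{(j-1)+(j'-1)(r+ℓ)}` in `h` is exactly `A_j·B_{j'}` (no other term of
the product contributes to that degree). -/
theorem fully_secure_degree_separation
    {F : Type*} [Field F] {a n b r ℓ : ℕ} (hr : 1 ≤ r) (hℓ : 1 ≤ ℓ)
    (A : Fin r → Matrix (Fin a) (Fin n) F) (KA : Fin ℓ → Matrix (Fin a) (Fin n) F)
    (B : Fin r → Matrix (Fin n) (Fin b) F) (KB : Fin ℓ → Matrix (Fin n) (Fin b) F) :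
    (∀ (i : Fin a) (i' : Fin b),
        ((encApoly A KA * encBpoly B KB) i i').natDegree ≤ (r + ℓ) ^ 2 - 1) ∧
      (∀ j j' : Fin r,
        (Matrix.of fun i i' =>
            ((encApoly A KA * encBpoly B KB) i i').coeff ((j : ℕ) + (j' : ℕ) * (r + ℓ)))
          = A j * B j') := by
  rw [encApoly_eq_stridedPoly, encBpoly_eq_stridedPoly]
  obtain ⟨hdeg, hcoeff⟩ :=
    fully_secure_degree_separation_general (Fin.append A KA) (Fin.append B KB)
  exact ⟨by simpa only [sq] using hdeg, fun j j' =>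
    by simpa [Matrix.map] using hcoeff (Fin.castAdd ℓ j) (Fin.castAdd ℓ j')⟩
end

section
/- Let F be a field, r, ℓ ≥ 1 integers, and x_1, ..., x_{(r+ℓ)²} distinct elements of F. Let (A_1,...,A_r, K_{A_1},...,K_{A_ℓ}, B_1,...,B_r, K_{B_1},...,K_{B_ℓ}) and (A'_1,...,A'_r, K'_{A_1},...,K'_{A_ℓ}, B'_1,...,B'_r, K'_{B_1},...,K'_{B_ℓ}) be two families of matrices of matching sizes with corresponding encoding polynomials Ã, B̃ and Ã', B̃'. If Ã(x_i)·B̃(x_i) = Ã'(x_i)·B̃'(x_i) for all i = 1, ..., (r+ℓ)², then A_j·B_{j'} = A'_j·B'_{j'} for all 1 ≤ j, j' ≤ r. In particular, the r² desired products A_j·B_{j'} are uniquely determined by the (r+ℓ)² server answers. -/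
/-!
Put `N = r + ℓ` and append the keys to the data. In the product of the two encodings the pair
`(i, k)` contributes to the exponent `i + k * N`, and uniqueness of base-`N` expansions says that
no two pairs share an exponent. So the product has `N ^ 2` coefficients, each of them a single
product of an `A`-block with a `B`-block, and the Vandermonde matrix of `N ^ 2` distinct points
recovers them all.
-/

/-- The fully secure encoding polynomial for the `A` side, evaluated at `x`:
`Ã(x) = ∑_{j=1}^{r} A_j x^{j-1} + ∑_{k=1}^{ℓ} K_{A_k} x^{k+r-1}`. -/
def encA {F : Type*} [Field F] {a n r ℓ : ℕ}
    (A : Fin r → Matrix (Fin a) (Fin n) F) (KA : Fin ℓ → Matrix (Fin a) (Fin n) F)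
    (x : F) : Matrix (Fin a) (Fin n) F :=
  (∑ j : Fin r, x ^ (j : ℕ) • A j) + ∑ k : Fin ℓ, x ^ ((k : ℕ) + r) • KA k

/-- The fully secure encoding polynomial for the `B` side, evaluated at `x`:
`B̃(x) = ∑_{j'=1}^{r} B_{j'} x^{(j'-1)(r+ℓ)} + ∑_{k=1}^{ℓ} K_{B_k} x^{(k+r-1)(r+ℓ)}`. -/
def encB {F : Type*} [Field F] {n b r ℓ : ℕ}
    (B : Fin r → Matrix (Fin n) (Fin b) F) (KB : Fin ℓ → Matrix (Fin n) (Fin b) F)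
    (x : F) : Matrix (Fin n) (Fin b) F :=
  (∑ j : Fin r, x ^ ((j : ℕ) * (r + ℓ)) • B j) + ∑ k : Fin ℓ, x ^ (((k : ℕ) + r) * (r + ℓ)) • KB k

section Interpolation

open scoped Matrix.Module

variable {R M : Type*} [CommRing R] [AddCommGroup M] [Module R M]

theorem isSMulRegular_matrix_of_isSMulRegular_det {κ : Type*} [Fintype κ] [DecidableEq κ]
    {V : Matrix κ κ R} (hV : IsSMulRegular M V.det) : IsSMulRegular (κ → M) V := by
  apply IsSMulRegular.of_mul (a := V.adjugate)
  rw [Matrix.adjugate_mul]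
  intro c c' h
  simp only [smul_assoc, one_smul] at h
  exact IsSMulRegular.pi (fun _ => hV) h

theorem coeff_eq_of_sum_pow_smul_eq [IsDomain R] [Module.IsTorsionFree R M]
    {ι : Type*} [Fintype ι] {x : ι → R} (hx : Function.Injective x)
    {d : ℕ} (hd : d ≤ Fintype.card ι) {c c' : Fin d → M}
    (h : ∀ i, ∑ t : Fin d, x i ^ (t : ℕ) • c t = ∑ t : Fin d, x i ^ (t : ℕ) • c' t) : c = c' := by
  obtain ⟨e⟩ : Nonempty (Fin d ↪ ι) :=
    Function.Embedding.nonempty_of_card_le (by rwa [Fintype.card_fin])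
  have hdet : (Matrix.vandermonde (x ∘ e)).det ≠ 0 :=
    Matrix.det_vandermonde_ne_zero_iff.mpr (hx.comp e.injective)
  exact isSMulRegular_matrix_of_isSMulRegular_det (IsRegular.of_ne_zero hdet).isSMulRegular
    (funext fun i => h (e i))

end Interpolation

theorem map_sum_pow_smul_sum_pow_mul_smul {R M N P : Type*} [CommSemiring R] [AddCommMonoid M]
    [AddCommMonoid N] [AddCommMonoid P] [Module R M] [Module R N] [Module R P]
    (f : M →ₗ[R] N →ₗ[R] P) {m n : ℕ} (A : Fin m → M) (B : Fin n → N) (x : R) :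
    f (∑ j : Fin m, x ^ (j : ℕ) • A j) (∑ k : Fin n, x ^ ((k : ℕ) * m) • B k) =
      ∑ t : Fin (n * m), x ^ (t : ℕ) • f (A t.modNat) (B t.divNat) := by
  calc f (∑ j : Fin m, x ^ (j : ℕ) • A j) (∑ k : Fin n, x ^ ((k : ℕ) * m) • B k)
      = ∑ k : Fin n, ∑ j : Fin m, x ^ ((k : ℕ) * m) • x ^ (j : ℕ) • f (A j) (B k) := by
        simp only [map_sum, map_smul, LinearMap.sum_apply, LinearMap.smul_apply, Finset.smul_sum]
    _ = ∑ p : Fin n × Fin m, x ^ (finProdFinEquiv p : ℕ) • f (A p.2) (B p.1) := by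
        simp only [Fintype.sum_prod_type, smul_smul, ← pow_add, finProdFinEquiv_apply_val,
          add_comm, mul_comm m]
    _ = ∑ t : Fin (n * m), x ^ (t : ℕ) • f (A t.modNat) (B t.divNat) := by
        rw [← finProdFinEquiv.symm.sum_comp]
        simp only [Equiv.apply_symm_apply]
        rfl

theorem fully_secure_decodability_general {R M N P ι : Type*} [CommRing R] [IsDomain R]
    [AddCommGroup M] [AddCommGroup N] [AddCommGroup P] [Module R M] [Module R N] [Module R P]
    [Module.IsTorsionFree R P] [Fintype ι] (f : M →ₗ[R] N →ₗ[R] P) {m n : ℕ}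
    {x : ι → R} (hx : Function.Injective x) (hcard : n * m ≤ Fintype.card ι)
    {A A' : Fin m → M} {B B' : Fin n → N}
    (h : ∀ i, f (∑ j : Fin m, x i ^ (j : ℕ) • A j) (∑ k : Fin n, x i ^ ((k : ℕ) * m) • B k) =
      f (∑ j : Fin m, x i ^ (j : ℕ) • A' j) (∑ k : Fin n, x i ^ ((k : ℕ) * m) • B' k))
    (j : Fin m) (k : Fin n) : f (A j) (B k) = f (A' j) (B' k) := by
  simp only [map_sum_pow_smul_sum_pow_mul_smul] at h
  simpa only [Fin.modNat_mkDivMod, Fin.divNat_mkDivMod] using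
    congrFun (coeff_eq_of_sum_pow_smul_eq hx hcard h) (Fin.mkDivMod k j)

theorem encA_eq_sum_append {F : Type*} [Field F] {a n r ℓ : ℕ}
    (A : Fin r → Matrix (Fin a) (Fin n) F) (KA : Fin ℓ → Matrix (Fin a) (Fin n) F) (x : F) :
    encA A KA x = ∑ i : Fin (r + ℓ), x ^ (i : ℕ) • Fin.append A KA i := by
  simp [encA, Fin.sum_univ_add, add_comm]

theorem encB_eq_sum_append {F : Type*} [Field F] {n b r ℓ : ℕ}
    (B : Fin r → Matrix (Fin n) (Fin b) F) (KB : Fin ℓ → Matrix (Fin n) (Fin b) F) (x : F) :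
    encB B KB x = ∑ i : Fin (r + ℓ), x ^ ((i : ℕ) * (r + ℓ)) • Fin.append B KB i := by
  simp [encB, Fin.sum_univ_add, add_comm]

/-- Decodability of the fully secure scheme: if the `(r+ℓ)²` server answers
`Ã(xᵢ)·B̃(xᵢ)` at distinct evaluation points agree for two families of matrices, then the
corresponding desired products agree: the `r²` products `A_j·B_{j'}` are uniquely
determined by the `(r+ℓ)²` answers. -/
theorem fully_secure_decodability
    {F : Type*} [Field F] {a n b r ℓ : ℕ} (hr : 1 ≤ r) (hℓ : 1 ≤ ℓ)
    (x : Fin ((r + ℓ) ^ 2) → F) (hx : Function.Injective x)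
    (A A' : Fin r → Matrix (Fin a) (Fin n) F) (KA KA' : Fin ℓ → Matrix (Fin a) (Fin n) F)
    (B B' : Fin r → Matrix (Fin n) (Fin b) F) (KB KB' : Fin ℓ → Matrix (Fin n) (Fin b) F)
    (h : ∀ i : Fin ((r + ℓ) ^ 2),
      encA A KA (x i) * encB B KB (x i) = encA A' KA' (x i) * encB B' KB' (x i)) :
    ∀ j j' : Fin r, A j * B j' = A' j * B' j' := by
  simp only [encA_eq_sum_append, encB_eq_sum_append] at h
  intro j j'
  simpa only [mulLinearMap_apply_apply, Fin.append_left] using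
    fully_secure_decodability_general (mulLinearMap F) hx (by simp [sq])
      (A := Fin.append A KA) (A' := Fin.append A' KA')
      (B := Fin.append B KB) (B' := Fin.append B' KB') h (Fin.castAdd ℓ j) (Fin.castAdd ℓ j')
end

section
/- (Theorem 3, achievability, as an existence statement.) Let N > ℓ ≥ 1 and r ≥ 1 be integers with (r+ℓ)² ≤ N, let F be a field containing N nonzero elements x_1, ..., x_N whose (r+ℓ)-th powers x_1^{r+ℓ}, ..., x_N^{r+ℓ} are pairwise distinct, and let m, n, p ≥ 1 with r dividing m and r dividing p; write a = m/r and b = p/r. Then there exist encoding functions f_i : F^{m×n} × (F^{a×n})^{ℓ} → F^{a×n} and g_i : F^{n×p} × (F^{n×b})^{ℓ} → F^{n×b} for i = 1, ..., N, and a decoding function d : (F^{a×b})^{N} → F^{m×p}, such that: (decodability) for every A ∈ F^{m×n}, B ∈ F^{n×p} and every pair of key tuples K_A ∈ (F^{a×n})^{ℓ}, K_B ∈ (F^{n×b})^{ℓ}, d(f_1(A,K_A)·g_1(B,K_B), ..., f_N(A,K_A)·g_N(B,K_B)) = A·B; and (security) for every subset L ⊆ {1,...,N} with |L| = ℓ and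 every pair (A, B), the map (K_A, K_B) ↦ ((f_i(A,K_A))_{i∈L}, (g_i(B,K_B))_{i∈L}) is a bijection from (F^{a×n})^{ℓ} × (F^{n×b})^{ℓ} onto itself. -/
/-!
Let `s = r + ℓ`. The two shares of server `i` are the value at `x i` of a polynomial with
coefficients `K_A, A_0, …, A_{r-1}` and the value at `x i ^ s` of a polynomial with coefficients
`K_B, B_0, …, B_{r-1}`, where the `A_j` are row blocks of `A` and the `B_k` column blocks of `B`.
Base-`s` digits are unique, so the product of the shares is the value at `x i` of a polynomial of
length `s ^ 2` in which every block product `A_j * B_k` is a coefficient of its own; interpolation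
recovers it. The contribution of the `ℓ` keys to `ℓ` shares is a Vandermonde transformation, which
is bijective, and the data only translate it.
-/

open Function

/-- The value at `y` of the polynomial of length `n` whose coefficients `M 0, …, M (n - 1)` lie in a
module. Shares and server answers are such values, with matrices as coefficients. -/
def evalCoeffs {R V : Type*} [Semiring R] [AddCommMonoid V] [Module R V] {n : ℕ}
    (y : R) (M : Fin n → V) : V :=
  ∑ j : Fin n, y ^ (j : ℕ) • M j

lemma evalCoeffs_append {R V : Type*} [Semiring R] [AddCommMonoid V] [Module R V] {n r : ℕ}
    (y : R) (K : Fin n → V) (M : Fin r → V) :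
    evalCoeffs y (Fin.append K M) = evalCoeffs y K + y ^ n • evalCoeffs y M := by
  simp [evalCoeffs, Fin.sum_univ_add, pow_add, mul_smul, Finset.smul_sum]

section Interpolation

variable {R V : Type*} [CommRing R] [AddCommGroup V] [Module R V] {n : ℕ}

lemma isUnit_det_vandermonde {v : Fin n → R} (hv : Pairwise fun i j => IsUnit (v i - v j)) :
    IsUnit (Matrix.vandermonde v).det := by
  simp only [Matrix.det_vandermonde, IsUnit.prod_iff, Finset.mem_Ioi]
  exact fun i _ j hij => hv hij.ne'

open scoped Matrix.Module in
lemma evalCoeffs_bijective {ι : Type*} (e : Fin n ≃ ι) {v : ι → R}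
    (hv : Pairwise fun i j => IsUnit (v i - v j)) :
    Bijective fun (M : Fin n → V) (i : ι) => evalCoeffs (v i) M := by
  have hW : IsUnit (Matrix.vandermonde (v ∘ e)) :=
    (Matrix.isUnit_iff_isUnit_det _).2 (isUnit_det_vandermonde (hv.comp_of_injective e.injective))
  have hsmul : Bijective fun M : Fin n → V => Matrix.vandermonde (v ∘ e) • M := hW.smul_bijective
  convert (e.arrowCongr (Equiv.refl V)).bijective.comp hsmul using 1
  funext M i
  simp [evalCoeffs, Matrix.vandermonde_apply]

lemma evalCoeffs_injective {ι : Type*} (e : Fin n ↪ ι) {v : ι → R}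
    (hv : Pairwise fun i j => IsUnit (v i - v j)) :
    Injective fun (M : Fin n → V) (i : ι) => evalCoeffs (v i) M := by
  have hrestrict : Injective fun (M : Fin n → V) (i : Fin n) => evalCoeffs (v (e i)) M :=
    (evalCoeffs_bijective (Equiv.refl _) (hv.comp_of_injective e.injective)).injective
  exact hrestrict.of_comp (f := fun Y => Y ∘ e)

lemma evalCoeffs_append_bijective {ι : Type*} (e : Fin n ≃ ι) {v : ι → R}
    (hv : Pairwise fun i j => IsUnit (v i - v j)) {r : ℕ} (M : Fin r → V) :
    Bijective fun (K : Fin n → V) (i : ι) => evalCoeffs (v i) (Fin.append K M) := by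
  simp only [evalCoeffs_append]
  exact (Equiv.addRight fun i => v i ^ n • evalCoeffs (v i) M).bijective.comp
    (evalCoeffs_bijective e hv)

end Interpolation

section MatrixProducts

variable {R : Type*} {α β ν : Type*} [Fintype ν]

lemma evalCoeffs_mul_evalCoeffs_pow [CommSemiring R] {s t : ℕ} (y : R)
    (P : Fin s → Matrix α ν R) (Q : Fin t → Matrix ν β R) :
    evalCoeffs y P * evalCoeffs (y ^ s) Q =
      evalCoeffs y fun l : Fin (t * s) =>
        P (finProdFinEquiv.symm l).2 * Q (finProdFinEquiv.symm l).1 := by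
  have hterm (k : Fin t) (j : Fin s) :
      (y ^ (j : ℕ) • P j) * ((y ^ s) ^ (k : ℕ) • Q k) =
        y ^ (finProdFinEquiv (k, j) : ℕ) • (P j * Q k) := by
    rw [Matrix.smul_mul, Matrix.mul_smul, smul_smul, ← pow_mul, ← pow_add,
      finProdFinEquiv_apply_val]
  calc
    _ = ∑ k : Fin t, ∑ j : Fin s, (y ^ (j : ℕ) • P j) * ((y ^ s) ^ (k : ℕ) • Q k) := by
      simp only [evalCoeffs, Matrix.sum_mul, Matrix.mul_sum]
    _ = ∑ kj : Fin t × Fin s, y ^ (finProdFinEquiv kj : ℕ) • (P kj.2 * Q kj.1) := by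
      simp only [hterm, Fintype.sum_prod_type]
    _ = _ := Fintype.sum_equiv finProdFinEquiv _ _ fun kj => by
      simp only [Equiv.symm_apply_apply]

lemma exists_decoder_evalCoeffs_mul_evalCoeffs_pow [CommRing R] {s t : ℕ} {ι : Type*}
    (e : Fin (t * s) ↪ ι) {x : ι → R} (hx : Pairwise fun i j => IsUnit (x i - x j)) :
    ∃ D : (ι → Matrix α β R) → Fin s → Fin t → Matrix α β R,
      ∀ (P : Fin s → Matrix α ν R) (Q : Fin t → Matrix ν β R),
        D (fun i => evalCoeffs (x i) P * evalCoeffs (x i ^ s) Q) = fun j k => P j * Q k := by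
  obtain ⟨C, hC⟩ := (evalCoeffs_injective (V := Matrix α β R) e hx).hasLeftInverse
  refine ⟨fun Y j k => C Y (finProdFinEquiv (k, j)), fun P Q => ?_⟩
  funext j k
  simp only [evalCoeffs_mul_evalCoeffs_pow]
  rw [hC, Equiv.symm_apply_apply]

end MatrixProducts

section Blocks

variable {R : Type*} {μ π ν ρ σ α β : Type*}

/-- The row blocks of `A`, where `e (j, u)` is the row of `A` at position `u` of block `j`. -/
def rowBlock (e : ρ × α ≃ μ) (A : Matrix μ ν R) (j : ρ) : Matrix α ν R :=
  A.submatrix (fun u => e (j, u)) id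

/-- The column blocks of `B`, where `e (k, v)` is the column of `B` at position `v` of block `k`. -/
def colBlock (e : σ × β ≃ π) (B : Matrix ν π R) (k : σ) : Matrix ν β R :=
  B.submatrix id fun v => e (k, v)

lemma reindex_comp_rowBlock_mul_colBlock [Fintype ν] [NonUnitalNonAssocSemiring R]
    (e : ρ × α ≃ μ) (e' : σ × β ≃ π) (A : Matrix μ ν R) (B : Matrix ν π R) :
    Matrix.reindex e e'
      (Matrix.comp ρ σ α β R (Matrix.of fun j k => rowBlock e A j * colBlock e' B k)) = A * B := by
  ext u v
  simp [rowBlock, colBlock, Matrix.mul_apply]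

/-- The division of `m` indices into `r` consecutive blocks of length `a`. -/
def blockEquiv {r a m : ℕ} (h : r * a = m) : Fin r × Fin a ≃ Fin m :=
  finProdFinEquiv.trans (finCongr h)

end Blocks

theorem fully_secure_scheme_exists_general
    {R : Type*} [CommRing R] {N ℓ r a b m n p : ℕ} (hrℓN : (r + ℓ) ^ 2 ≤ N) (x : Fin N → R)
    (hx : Pairwise fun i j => IsUnit (x i ^ (r + ℓ) - x j ^ (r + ℓ)))
    (hm : r * a = m) (hp : r * b = p) :
    ∃ (f : Fin N → Matrix (Fin m) (Fin n) R →
          (Fin ℓ → Matrix (Fin a) (Fin n) R) → Matrix (Fin a) (Fin n) R)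
      (g : Fin N → Matrix (Fin n) (Fin p) R →
          (Fin ℓ → Matrix (Fin n) (Fin b) R) → Matrix (Fin n) (Fin b) R)
      (d : (Fin N → Matrix (Fin a) (Fin b) R) → Matrix (Fin m) (Fin p) R),
      (∀ (A : Matrix (Fin m) (Fin n) R) (B : Matrix (Fin n) (Fin p) R)
          (KA : Fin ℓ → Matrix (Fin a) (Fin n) R)
          (KB : Fin ℓ → Matrix (Fin n) (Fin b) R),
          d (fun i => f i A KA * g i B KB) = A * B) ∧
      (∀ L : Finset (Fin N), L.card = ℓ →
        ∀ (A : Matrix (Fin m) (Fin n) R) (B : Matrix (Fin n) (Fin p) R),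
          Bijective
            (fun KK : (Fin ℓ → Matrix (Fin a) (Fin n) R) ×
                (Fin ℓ → Matrix (Fin n) (Fin b) R) =>
              ((fun i : L => f i.1 A KK.1), (fun i : L => g i.1 B KK.2)))) := by
  rw [add_comm r ℓ] at hrℓN hx
  have hx_sub : Pairwise fun i j => IsUnit (x i - x j) := fun i j hij =>
    isUnit_of_dvd_unit (sub_dvd_pow_sub_pow (x i) (x j) (ℓ + r)) (hx hij)
  obtain ⟨D, hD⟩ := exists_decoder_evalCoeffs_mul_evalCoeffs_pow (α := Fin a)
    (β := Fin b) (ν := Fin n) (Fin.castLEEmb ((sq (ℓ + r)).symm.trans_le hrℓN)) hx_sub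
  refine ⟨fun i A KA => evalCoeffs (x i) (Fin.append KA (rowBlock (blockEquiv hm) A)),
    fun i B KB => evalCoeffs (x i ^ (ℓ + r)) (Fin.append KB (colBlock (blockEquiv hp) B)),
    fun Y => Matrix.reindex (blockEquiv hm) (blockEquiv hp) <| Matrix.comp _ _ _ _ R <|
      Matrix.of fun j k => D Y (Fin.natAdd ℓ j) (Fin.natAdd ℓ k),
    fun A B KA KB => ?_, fun L hL A B => ?_⟩
  · simp only [hD, Fin.append_right]
    exact reindex_comp_rowBlock_mul_colBlock _ _ A B
  · have e : Fin ℓ ≃ L := (L.equivFinOfCardEq hL).symm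
    exact (evalCoeffs_append_bijective e (hx_sub.comp_of_injective Subtype.val_injective) _).prodMap
      (evalCoeffs_append_bijective e (hx.comp_of_injective Subtype.val_injective) _)

/-- Theorem 3, achievability, as an existence statement: for `N > ℓ ≥ 1`, `r ≥ 1` with
`(r+ℓ)² ≤ N`, a field `F` with `N` nonzero elements whose `(r+ℓ)`-th powers are pairwise
distinct, and `r ∣ m`, `r ∣ p` with `a = m/r`, `b = p/r`, there exist encodings
`fᵢ : F^{m×n} × (F^{a×n})^ℓ → F^{a×n}`, `gᵢ : F^{n×p} × (F^{n×b})^ℓ → F^{n×b}` and a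
decoder `d : (F^{a×b})^N → F^{m×p}` such that `d` recovers `A·B` from the server answers
`fᵢ(A,K_A)·gᵢ(B,K_B)`, and for every `ℓ`-subset `L` of servers and every pair `(A, B)`,
the map `(K_A, K_B) ↦ ((fᵢ(A,K_A))_{i∈L}, (gᵢ(B,K_B))_{i∈L})` is a bijection of
`(F^{a×n})^ℓ × (F^{n×b})^ℓ` onto itself. -/
theorem fully_secure_scheme_exists
    {F : Type*} [Field F] {N ℓ r m n p : ℕ}
    (hℓ : 1 ≤ ℓ) (hN : ℓ < N) (hr : 1 ≤ r) (hrℓN : (r + ℓ) ^ 2 ≤ N)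
    (hm : 1 ≤ m) (hn : 1 ≤ n) (hp : 1 ≤ p)
    (x : Fin N → F) (hx0 : ∀ i, x i ≠ 0)
    (hx : Function.Injective fun i => x i ^ (r + ℓ))
    (hdm : r ∣ m) (hdp : r ∣ p) :
    ∃ (f : Fin N → Matrix (Fin m) (Fin n) F →
          (Fin ℓ → Matrix (Fin (m / r)) (Fin n) F) → Matrix (Fin (m / r)) (Fin n) F)
      (g : Fin N → Matrix (Fin n) (Fin p) F →
          (Fin ℓ → Matrix (Fin n) (Fin (p / r)) F) → Matrix (Fin n) (Fin (p / r)) F)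
      (d : (Fin N → Matrix (Fin (m / r)) (Fin (p / r)) F) → Matrix (Fin m) (Fin p) F),
      (∀ (A : Matrix (Fin m) (Fin n) F) (B : Matrix (Fin n) (Fin p) F)
          (KA : Fin ℓ → Matrix (Fin (m / r)) (Fin n) F)
          (KB : Fin ℓ → Matrix (Fin n) (Fin (p / r)) F),
          d (fun i => f i A KA * g i B KB) = A * B) ∧
      (∀ L : Finset (Fin N), L.card = ℓ →
        ∀ (A : Matrix (Fin m) (Fin n) F) (B : Matrix (Fin n) (Fin p) F),
          Function.Bijective
            (fun KK : (Fin ℓ → Matrix (Fin (m / r)) (Fin n) F) ×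
                (Fin ℓ → Matrix (Fin n) (Fin (p / r)) F) =>
              ((fun i : L => f i.1 A KK.1), (fun i : L => g i.1 B KK.2)))) := by
  exact fully_secure_scheme_exists_general hrℓN x
    (fun _ _ hij => (sub_ne_zero.2 (hx.ne hij)).isUnit)
    (Nat.mul_div_cancel' hdm) (Nat.mul_div_cancel' hdp)
end

section
/- (Example: the (8,1) aligned secret sharing scheme.) Let F be a field, and let A_1, A_2, K_A ∈ F^{a×n} and B_1, B_2, K_B ∈ F^{n×b}. Define the matrix-coefficient polynomials Ã(x) = A_1 + A_2 x + K_A x² and B̃(x) = B_1 + B_2 x³ + K_B x⁵. Then Ã(x)·B̃(x) = A_1B_1 + A_2B_1 x + K_AB_1 x² + A_1B_2 x³ + A_2B_2 x⁴ + (K_AB_2 + A_1K_B) x⁵ + A_2K_B x⁶ + K_AK_B x⁷; in particular, the product polynomial has degree at most 7, its coefficients of x⁰, x¹, x³, x⁴ are exactly A_1B_1, A_2B_1, A_1B_2, A_2B_2, and consequently these four products are uniquely determined by the evaluations Ã(x_i)·B̃(x_i) at any 8 distinct points x_1, ..., x_8 of F. -/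
/-- The aligned encoding of the `A` side in the `(8,1)` example:
`Ã(x) = A₁ + A₂ x + K_A x²`. -/
def alignedA {F : Type*} [Field F] {a n : ℕ}
    (A1 A2 KA : Matrix (Fin a) (Fin n) F) (x : F) : Matrix (Fin a) (Fin n) F :=
  A1 + x • A2 + x ^ 2 • KA

/-- The aligned encoding of the `B` side in the `(8,1)` example:
`B̃(x) = B₁ + B₂ x³ + K_B x⁵`. -/
def alignedB {F : Type*} [Field F] {n b : ℕ}
    (B1 B2 KB : Matrix (Fin n) (Fin b) F) (x : F) : Matrix (Fin n) (Fin b) F :=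
  B1 + x ^ 3 • B2 + x ^ 5 • KB

/-!
The interference terms `K_A B₂` and `A₁ K_B` meet in degree `2 + 3 = 0 + 5`, so the product of the
encodings has only 8 coefficients. The Vandermonde matrix of 8 distinct points has nonzero
determinant, and multiplying by its adjugate recovers each coefficient up to that determinant. This
works for coefficients in any torsion-free module, hence for matrices without passing to entries.
-/

section Interpolation

variable {R M : Type*} [CommRing R] [AddCommGroup M] [Module R M]

open scoped Matrix.Module in
theorem isSMulRegular_of_isSMulRegular_det {ι : Type*} [Fintype ι] [DecidableEq ι]
    {V : Matrix ι ι R} (hV : IsSMulRegular M V.det) : IsSMulRegular (ι → M) V := by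
  have adjugate_smul_smul (c : ι → M) : V.adjugate • V • c = V.det • c := by
    rw [← mul_smul, Matrix.adjugate_mul, smul_assoc, one_smul]
  intro c d h
  replace h : V • c = V • d := h
  have hdet : V.det • c = V.det • d := by
    rw [← adjugate_smul_smul, h, adjugate_smul_smul]
  exact funext fun i => hV (congrFun hdet i)

theorem eq_of_forall_sum_pow_smul_eq [IsDomain R] [Module.IsTorsionFree R M] {k : ℕ}
    {x : Fin k → R} (hx : Function.Injective x) {c d : Fin k → M}
    (h : ∀ i, ∑ j : Fin k, x i ^ (j : ℕ) • c j = ∑ j : Fin k, x i ^ (j : ℕ) • d j) : c = d :=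
  have hdet : (Matrix.vandermonde x).det ≠ 0 := Matrix.det_vandermonde_ne_zero_iff.mpr hx
  isSMulRegular_of_isSMulRegular_det (IsSMulRegular.of_ne_zero hdet) (funext h)

end Interpolation

section AlignedProduct

variable {F : Type*} [Field F] {a n b : ℕ}

/-- The coefficients of `Ã(x) B̃(x)`, the one of `x ^ j` being indexed by `j`, so that the desired
products sit at the indices `0, 1, 3, 4` and the interference at `2, 5, 6, 7`. -/
def alignedCoeff (A1 A2 KA : Matrix (Fin a) (Fin n) F) (B1 B2 KB : Matrix (Fin n) (Fin b) F) :
    Fin 8 → Matrix (Fin a) (Fin b) F :=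
  ![A1 * B1, A2 * B1, KA * B1, A1 * B2, A2 * B2, KA * B2 + A1 * KB, A2 * KB, KA * KB]

theorem alignedA_mul_alignedB (A1 A2 KA : Matrix (Fin a) (Fin n) F)
    (B1 B2 KB : Matrix (Fin n) (Fin b) F) (x : F) :
    alignedA A1 A2 KA x * alignedB B1 B2 KB x
      = A1 * B1 + x • (A2 * B1) + x ^ 2 • (KA * B1) + x ^ 3 • (A1 * B2)
          + x ^ 4 • (A2 * B2) + x ^ 5 • (KA * B2 + A1 * KB)
          + x ^ 6 • (A2 * KB) + x ^ 7 • (KA * KB) := by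
  simp only [alignedA, alignedB, Matrix.add_mul, Matrix.mul_add, Matrix.smul_mul,
    Matrix.mul_smul]
  module

theorem alignedA_mul_alignedB_eq_sum (A1 A2 KA : Matrix (Fin a) (Fin n) F)
    (B1 B2 KB : Matrix (Fin n) (Fin b) F) (x : F) :
    alignedA A1 A2 KA x * alignedB B1 B2 KB x
      = ∑ j : Fin 8, x ^ (j : ℕ) • alignedCoeff A1 A2 KA B1 B2 KB j := by
  simp [alignedA_mul_alignedB, alignedCoeff, Fin.sum_univ_eight]

theorem alignedCoeff_eq_of_forall_mul_eq {x : Fin 8 → F} (hx : Function.Injective x)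
    {A1 A2 KA A1' A2' KA' : Matrix (Fin a) (Fin n) F}
    {B1 B2 KB B1' B2' KB' : Matrix (Fin n) (Fin b) F}
    (h : ∀ i, alignedA A1 A2 KA (x i) * alignedB B1 B2 KB (x i)
      = alignedA A1' A2' KA' (x i) * alignedB B1' B2' KB' (x i)) :
    alignedCoeff A1 A2 KA B1 B2 KB = alignedCoeff A1' A2' KA' B1' B2' KB' :=
  eq_of_forall_sum_pow_smul_eq hx fun i => by
    simpa only [alignedA_mul_alignedB_eq_sum] using h i

end AlignedProduct

/-- Example 2, the `(8,1)` aligned secret sharing scheme: with `Ã(x) = A₁ + A₂x + K_Ax²`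
and `B̃(x) = B₁ + B₂x³ + K_Bx⁵`, the product expands as
`Ã(x)B̃(x) = A₁B₁ + A₂B₁x + K_AB₁x² + A₁B₂x³ + A₂B₂x⁴ + (K_AB₂ + A₁K_B)x⁵ + A₂K_Bx⁶ + K_AK_Bx⁷`
(a polynomial of degree at most 7 whose coefficients of `x⁰, x¹, x³, x⁴` are exactly
`A₁B₁, A₂B₁, A₁B₂, A₂B₂`), and consequently these four products are uniquely determined
by the evaluations `Ã(xᵢ)·B̃(xᵢ)` at any 8 distinct points. -/
theorem aligned_example_8_1
    {F : Type*} [Field F] {a n b : ℕ}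
    (A1 A2 KA : Matrix (Fin a) (Fin n) F) (B1 B2 KB : Matrix (Fin n) (Fin b) F) :
    (∀ x : F,
      alignedA A1 A2 KA x * alignedB B1 B2 KB x
        = A1 * B1 + x • (A2 * B1) + x ^ 2 • (KA * B1) + x ^ 3 • (A1 * B2)
            + x ^ 4 • (A2 * B2) + x ^ 5 • (KA * B2 + A1 * KB)
            + x ^ 6 • (A2 * KB) + x ^ 7 • (KA * KB)) ∧
    (∀ (x : Fin 8 → F), Function.Injective x →
      ∀ (A1' A2' KA' : Matrix (Fin a) (Fin n) F) (B1' B2' KB' : Matrix (Fin n) (Fin b) F),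
        (∀ i : Fin 8,
          alignedA A1 A2 KA (x i) * alignedB B1 B2 KB (x i)
            = alignedA A1' A2' KA' (x i) * alignedB B1' B2' KB' (x i)) →
        A1 * B1 = A1' * B1' ∧ A2 * B1 = A2' * B1' ∧
          A1 * B2 = A1' * B2' ∧ A2 * B2 = A2' * B2') := by
  refine ⟨alignedA_mul_alignedB A1 A2 KA B1 B2 KB, fun x hx A1' A2' KA' B1' B2' KB' h => ?_⟩
  have hcoeff := congrFun (alignedCoeff_eq_of_forall_mul_eq hx h)
  exact ⟨hcoeff 0, hcoeff 1, hcoeff 3, hcoeff 4⟩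
end
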